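/- arXiv:1111.0234 — 7 statements merged into one kernel-verified Lean document; each statement's English description precedes it below -/
import Mathlib

section
/- There exist positive real constants c₁ and c₂ such that for all integers a ≥ 2 and q ≥ 4a² log a, the sum choice number of the complete bipartite graph K_{a,q} satisfies 2q + c₁·a·√(q·log a) ≤ χ_sc(K_{a,q}) ≤ 2q + c₂·a·√(q·log a). -/
/-!
Upper bound. Take `f = 2` on the `q` side and `f = s ≈ 12 √(q log a)` on the `a` side. The lists of
size two are `q` pairs of colors, and it suffices to find a set of colors that contains no pair and
meets all lists of size `s`: color the `a` side inside it, the `q` side outside. Keep every color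
independently with probability `p = √(log a / q) / 2`. About `q p² = log a / 4` pairs survive
completely, while a list keeps at least `6 log a` colors on average, so with positive probability
every list keeps more colors than there are surviving pairs (`exists_good_set`, an exponential
moment bound on weighted sums over subsets). Deleting one color of each surviving pair then works.

Lower bound. Let `f` be sufficient. If more than half of the `q` side has `f ≤ 2`, take the edges of
`k` disjoint copies of `K_{h,h}` as pairs on that side, with `k h²` at most the number of these
vertices (but of order `q`), and the `2 ^ k` unions of one side of each copy as lists on the
`a` side. This assignment is bad, so fewer than `2 ^ k` vertices on the `a` side have
`f ≤ k h` (`Choosable.not_many_short`). With `k` of order `log a` and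
`2 ^ k ≤ a / 2 + 1`, at least half of the `a` side has `f > k h`, which is of order `√(q log a)`.
Otherwise at least half of the `q` side has `f ≥ 3`, and this is enough since
`a √(q log a) ≤ q / 2`. Vertices with `f = 1` on the `q` side save at most half of what they cost
on the `a` side (`Choosable.ones_lt`).
-/
open SimpleGraph Finset

/-- A graph `G` is `f`-choosable (i.e. `f` is *sufficient*) if for every assignment of
finite lists of colors with `|L v| = f v` there is a proper coloring choosing colors
from the lists. -/
def Choosable {V : Type*} (G : SimpleGraph V) (f : V → ℕ) : Prop :=
  ∀ L : V → Finset ℕ, (∀ v, (L v).card = f v) →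
    ∃ c : V → ℕ, (∀ v, c v ∈ L v) ∧ ∀ u v, G.Adj u v → c u ≠ c v

/-- The sum choice number of a finite graph. -/
noncomputable def sumChoice {V : Type*} [Fintype V] (G : SimpleGraph V) : ℕ :=
  sInf {n : ℕ | ∃ f : V → ℕ, Choosable G f ∧ ∑ v, f v = n}



/-! ### Weighted counting of random subsets -/

/-- Weight of `S ⊆ U` when every element of `U` is kept independently with probability `p`. -/
noncomputable def subsetWeight (U : Finset ℕ) (p : ℝ) (S : Finset ℕ) : ℝ :=
  p ^ S.card * (1 - p) ^ (U \ S).card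

lemma sum_subsetWeight (U : Finset ℕ) (p : ℝ) :
    ∑ S ∈ U.powerset, subsetWeight U p S = 1 := by
  have h := Finset.prod_add (fun _ : ℕ => p) (fun _ => 1 - p) U
  simp only [Finset.prod_const] at h
  unfold subsetWeight
  rw [← h]
  simp

/-- The generating function of `|S ∩ L|`, evaluated at `1/2`. -/
lemma sum_subsetWeight_half (U : Finset ℕ) (p : ℝ) (L : Finset ℕ) (hL : L ⊆ U) :
    ∑ S ∈ U.powerset, subsetWeight U p S * (1 / 2) ^ (S ∩ L).card = (1 - p / 2) ^ L.card := by
  have h := Finset.prod_add (fun i : ℕ => p * (if i ∈ L then (1 / 2 : ℝ) else 1))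
    (fun _ => 1 - p) U
  have h1 : ∏ i ∈ U, (p * (if i ∈ L then (1 / 2 : ℝ) else 1) + (1 - p))
      = (1 - p / 2) ^ L.card := by
    have : ∀ i ∈ U, (p * (if i ∈ L then (1 / 2 : ℝ) else 1) + (1 - p))
        = if i ∈ L then (1 - p / 2) else 1 := by
      intro i _
      split_ifs <;> ring
    rw [Finset.prod_congr rfl this, Finset.prod_ite_mem, Finset.inter_eq_right.mpr hL,
      Finset.prod_const]
  rw [← h1, h]
  refine Finset.sum_congr rfl fun S _ => ?_
  rw [Finset.prod_mul_distrib, Finset.prod_ite_mem]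
  simp only [Finset.prod_const, subsetWeight]
  ring

lemma sum_subsetWeight_superset (U : Finset ℕ) (p : ℝ) (E : Finset ℕ) (hE : E ⊆ U) :
    ∑ S ∈ U.powerset, subsetWeight U p S * (if E ⊆ S then 1 else 0) = p ^ E.card := by
  have h := Finset.prod_add (fun _ : ℕ => p) (fun i => if i ∈ E then 0 else 1 - p) U
  have h1 : ∏ i ∈ U, (p + if i ∈ E then 0 else 1 - p) = p ^ E.card := by
    have : ∀ i ∈ U, (p + if i ∈ E then 0 else 1 - p) = if i ∈ E then p else 1 := by
      intro i _
      split_ifs <;> ring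
    rw [Finset.prod_congr rfl this, Finset.prod_ite_mem, Finset.inter_eq_right.mpr hE,
      Finset.prod_const]
  rw [← h1, h]
  refine Finset.sum_congr rfl fun S hS => ?_
  rw [Finset.mem_powerset] at hS
  simp only [Finset.prod_const, subsetWeight]
  split_ifs with hES
  · rw [mul_one]
    congr 1
    rw [← Finset.prod_const]
    refine Finset.prod_congr rfl fun i hi => ?_
    rw [Finset.mem_sdiff] at hi
    rw [if_neg fun hiE => hi.2 (hES hiE)]
  · rw [mul_zero]
    obtain ⟨x, hxE, hxS⟩ := Finset.not_subset.mp hES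
    rw [Finset.prod_eq_zero (i := x) (Finset.mem_sdiff.mpr ⟨hE hxE, hxS⟩) (by simp [hxE]),
      mul_zero]

/-! ### Upper bound -/

/-- Some set `S` of colors meets every list on the `a` side in more points than there are pairs
contained in `S`. -/
lemma exists_good_set {a q s : ℕ} (p T : ℝ) (hp0 : 0 ≤ p) (hp1 : p ≤ 1) (hT : 0 < T)
    (hE : Real.exp T * (a * (1 - p / 2) ^ s) + q * p ^ 2 / T < 1)
    (L : Fin a → Finset ℕ) (M : Fin q → Finset ℕ)
    (hL : ∀ u, (L u).card = s) (hM : ∀ v, (M v).card = 2) :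
    ∃ S : Finset ℕ, ∀ u, (univ.filter fun v => M v ⊆ S).card < (S ∩ L u).card := by
  set U : Finset ℕ := (univ.biUnion L) ∪ (univ.biUnion M) with hU
  have hLU : ∀ u, L u ⊆ U := fun u =>
    (Finset.subset_biUnion_of_mem L (mem_univ u)).trans subset_union_left
  have hMU : ∀ u, M u ⊆ U := fun u =>
    (Finset.subset_biUnion_of_mem M (mem_univ u)).trans subset_union_right
  let F : Finset ℕ → ℝ := fun S => Real.exp T * (∑ u, (1 / 2 : ℝ) ^ (S ∩ L u).card)
    + (∑ v, if M v ⊆ S then (1 : ℝ) else 0) / T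
  have hEF : ∑ S ∈ U.powerset, subsetWeight U p S * F S
      = Real.exp T * (a * (1 - p / 2) ^ s) + q * p ^ 2 / T := by
    have e1 : ∀ S, subsetWeight U p S * F S
        = Real.exp T * (∑ u, subsetWeight U p S * (1 / 2 : ℝ) ^ (S ∩ L u).card)
          + (∑ v, subsetWeight U p S * if M v ⊆ S then (1 : ℝ) else 0) / T := by
      intro S
      simp only [F]
      rw [← Finset.mul_sum, ← Finset.mul_sum]
      ring
    simp only [e1]
    rw [Finset.sum_add_distrib, ← Finset.mul_sum, ← Finset.sum_div, Finset.sum_comm,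
      Finset.sum_comm (t := (univ : Finset (Fin q)))]
    rw [Finset.sum_congr rfl fun u _ => sum_subsetWeight_half U p (L u) (hLU u),
      Finset.sum_congr rfl fun u _ => sum_subsetWeight_superset U p (M u) (hMU u)]
    simp [hL, hM]
  obtain ⟨S, hS⟩ : ∃ S, F S < 1 := by
    by_contra! hcon
    have : ∑ S ∈ U.powerset, subsetWeight U p S
        ≤ ∑ S ∈ U.powerset, subsetWeight U p S * F S := by
      refine Finset.sum_le_sum fun S _ => le_mul_of_one_le_right ?_ (hcon S)
      unfold subsetWeight
      have : 0 ≤ 1 - p := by linarith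
      positivity
    rw [sum_subsetWeight, hEF] at this
    linarith
  refine ⟨S, fun u => ?_⟩
  have hA : Real.exp T * (1 / 2 : ℝ) ^ (S ∩ L u).card
      ≤ Real.exp T * (∑ u, (1 / 2 : ℝ) ^ (S ∩ L u).card) := by
    gcongr
    exact Finset.single_le_sum (f := fun u => (1 / 2 : ℝ) ^ (S ∩ L u).card)
      (fun _ _ => by positivity) (mem_univ u)
  have hB0 : (0 : ℝ) ≤ (∑ v, if M v ⊆ S then (1 : ℝ) else 0) / T :=
    div_nonneg (Finset.sum_nonneg fun _ _ => by split_ifs <;> norm_num) hT.le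
  have hA0 : 0 ≤ Real.exp T * (∑ u, (1 / 2 : ℝ) ^ (S ∩ L u).card) := by positivity
  have hB : ((univ.filter fun v => M v ⊆ S).card : ℝ) < T := by
    have : (∑ v, if M v ⊆ S then (1 : ℝ) else 0) / T < 1 := by
      simp only [F] at hS
      linarith
    rw [div_lt_one hT, Finset.sum_boole] at this
    exact this
  have hX : Real.exp T * (1 / 2 : ℝ) ^ (S ∩ L u).card < 1 := by
    simp only [F] at hS
    linarith
  by_contra! hle
  have hXT : ((S ∩ L u).card : ℝ) ≤ T :=
    le_trans (by exact_mod_cast hle) hB.le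
  have h2 : (2 : ℝ) ^ (S ∩ L u).card ≤ Real.exp T := by
    calc (2 : ℝ) ^ (S ∩ L u).card ≤ (Real.exp 1) ^ (S ∩ L u).card := by
          gcongr
          have := Real.add_one_le_exp 1
          linarith
      _ = Real.exp ((S ∩ L u).card : ℝ) := by rw [← Real.exp_nat_mul, mul_one]
      _ ≤ Real.exp T := Real.exp_le_exp.mpr hXT
  rw [one_div, inv_pow, ← div_eq_mul_inv, div_lt_one (by positivity)] at hX
  linarith

/-- Deleting one color of each pair inside `S` leaves a set containing no pair that still meets
every list on the `a` side. -/
lemma choosable_of_good_set {a q s : ℕ}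
    (h : ∀ (L : Fin a → Finset ℕ) (M : Fin q → Finset ℕ), (∀ u, (L u).card = s) →
      (∀ v, (M v).card = 2) →
      ∃ S : Finset ℕ, ∀ u, (univ.filter fun v => M v ⊆ S).card < (S ∩ L u).card) :
    Choosable (completeBipartiteGraph (Fin a) (Fin q)) (Sum.elim (fun _ => s) (fun _ => 2)) := by
  intro L hL
  obtain ⟨S, hS⟩ := h (fun u => L (Sum.inl u)) (fun v => L (Sum.inr v))
    (fun u => by simpa using hL (Sum.inl u)) (fun v => by simpa using hL (Sum.inr v))
  have hne : ∀ v : Fin q, ∃ x, x ∈ L (Sum.inr v) := fun v => by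
    have : 0 < (L (Sum.inr v)).card := by rw [hL]; simp
    exact Finset.card_pos.mp this
  choose x hx using hne
  set D : Finset ℕ := (univ.filter fun v => L (Sum.inr v) ⊆ S).image x with hD
  have hDcard : D.card ≤ (univ.filter fun v => L (Sum.inr v) ⊆ S).card := Finset.card_image_le
  have hA : ∀ u : Fin a, ∃ y, y ∈ L (Sum.inl u) ∧ y ∈ S ∧ y ∉ D := by
    intro u
    obtain ⟨y, hy, hyD⟩ := Finset.exists_mem_notMem_of_card_lt_card (lt_of_le_of_lt hDcard (hS u))
    rw [Finset.mem_inter] at hy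
    exact ⟨y, hy.2, hy.1, hyD⟩
  have hQ : ∀ v : Fin q, ∃ y, y ∈ L (Sum.inr v) ∧ ¬ (y ∈ S ∧ y ∉ D) := by
    intro v
    by_cases hv : L (Sum.inr v) ⊆ S
    · refine ⟨x v, hx v, fun hh => hh.2 ?_⟩
      exact Finset.mem_image_of_mem x (by simpa using hv)
    · obtain ⟨y, hy, hyS⟩ := Finset.not_subset.mp hv
      exact ⟨y, hy, fun hh => hyS hh.1⟩
  choose cA hcA using hA
  choose cQ hcQ using hQ
  refine ⟨Sum.elim cA cQ, ?_, ?_⟩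
  · rintro (u | v)
    · exact (hcA u).1
    · exact (hcQ v).1
  · rintro (u | u) (v | v) huv
    · simp at huv
    · intro heq
      simp only [Sum.elim_inl, Sum.elim_inr] at heq
      exact (hcQ v).2 (heq ▸ (hcA u).2)
    · intro heq
      simp only [Sum.elim_inl, Sum.elim_inr] at heq
      exact (hcQ u).2 (heq ▸ (hcA v).2)
    · simp at huv

lemma choosable_upper {a q : ℕ} (ha : 2 ≤ a) (hq : 4 * (a : ℝ) ^ 2 * Real.log a ≤ (q : ℝ)) :
    Choosable (completeBipartiteGraph (Fin a) (Fin q))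
      (Sum.elim (fun _ => ⌈12 * Real.sqrt (q * Real.log a)⌉₊) (fun _ => 2)) := by
  refine choosable_of_good_set fun L M hL hM => ?_
  have haR : (2 : ℝ) ≤ a := by exact_mod_cast ha
  set l := Real.log a with hl
  have hl0 : 0 < l := Real.log_pos (by linarith)
  have hq0 : (0 : ℝ) < q := lt_of_lt_of_le (by positivity) hq
  set r := Real.sqrt (l / q) with hr
  have hr0 : 0 ≤ r := Real.sqrt_nonneg _
  have hr2 : r ^ 2 = l / q := Real.sq_sqrt (by positivity)
  have hlq : l ≤ q := by
    have h4 : (1 : ℝ) ≤ 4 * (a : ℝ) ^ 2 := by nlinarith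
    nlinarith [mul_le_mul_of_nonneg_right h4 hl0.le]
  have hr1 : r ≤ 1 := by
    rw [hr, Real.sqrt_le_one, div_le_one hq0]
    exact hlq
  have hrs : r * Real.sqrt (q * l) = l := by
    rw [hr, ← Real.sqrt_mul (by positivity)]
    rw [show l / q * (q * l) = l ^ 2 by field_simp]
    exact Real.sqrt_sq hl0.le
  -- With these parameters the pairs contribute exactly `1/2` and the lists less than `1/a`.
  refine exists_good_set (r / 2) (l / 2) (by positivity) (by linarith) (by positivity) ?_ L M hL hM
  set s := ⌈12 * Real.sqrt (q * l)⌉₊ with hs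
  have hsle : 12 * Real.sqrt (q * l) ≤ s := Nat.le_ceil _
  have h1 : (q : ℝ) * (r / 2) ^ 2 / (l / 2) = 1 / 2 := by
    rw [div_pow, hr2]
    field_simp
  have h2 : (1 - r / 2 / 2) ^ s ≤ Real.exp (-(3 * l)) := by
    calc (1 - r / 2 / 2) ^ s ≤ (Real.exp (-(r / 2 / 2))) ^ s :=
          pow_le_pow_left₀ (by linarith) (Real.one_sub_le_exp_neg _) s
      _ = Real.exp (s * (-(r / 2 / 2))) := by rw [← Real.exp_nat_mul]
      _ ≤ Real.exp (-(3 * l)) := by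
          apply Real.exp_le_exp.mpr
          nlinarith [mul_le_mul_of_nonneg_left hsle hr0]
  have hae : (a : ℝ) = Real.exp l := (Real.exp_log (by linarith)).symm
  have h3 : Real.exp (l / 2) * (a * (1 - r / 2 / 2) ^ s) < 1 / 2 := by
    calc Real.exp (l / 2) * (a * (1 - r / 2 / 2) ^ s)
        ≤ Real.exp (l / 2) * (Real.exp l * Real.exp (-(3 * l))) := by
          rw [← hae]
          gcongr
      _ = Real.exp (l / 2 + (l + -(3 * l))) := by rw [Real.exp_add, Real.exp_add]
      _ < Real.exp (-l) := Real.exp_lt_exp.mpr (by linarith)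
      _ = 1 / a := by rw [Real.exp_neg, ← hae, one_div]
      _ ≤ 1 / 2 := one_div_le_one_div_of_le (by norm_num) haR
  rw [h1]
  linarith

/-! ### Lower bound -/

/-- A sufficient `f` also handles lists that are too large, with colors from any countable type. -/
lemma Choosable.exists_coloring {V C : Type*} [Countable C] {G : SimpleGraph V} {f : V → ℕ}
    (hf : Choosable G f) (L : V → Finset C) (hL : ∀ v, f v ≤ (L v).card) :
    ∃ c : V → C, (∀ v, c v ∈ L v) ∧ ∀ u v, G.Adj u v → c u ≠ c v := by
  obtain ⟨g, hg⟩ := exists_injective_nat C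
  choose L' hsub hL' using fun v => Finset.exists_subset_card_eq (hL v)
  obtain ⟨c, hc, hadj⟩ := hf (fun v => (L' v).map ⟨g, hg⟩) (fun v => by simp [hL'])
  have : ∀ v, ∃ x ∈ L' v, g x = c v := fun v => by simpa using hc v
  choose d hd hdc using this
  refine ⟨d, fun v => hsub v (hd v), fun u v huv heq => hadj u v huv ?_⟩
  rw [← hdc, ← hdc, heq]

lemma Choosable.pos {V : Type*} {G : SimpleGraph V} {f : V → ℕ}
    (hf : Choosable G f) (v : V) : 1 ≤ f v := by
  by_contra! h
  obtain ⟨c, hc, -⟩ := hf (fun v => Finset.range (f v)) (by simp)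
  have := hc v
  simp only [Finset.mem_range] at this
  omega

/-- Giving distinct one-element lists to the vertices `v` with `f v = 1` forces longer lists on
the other side. -/
lemma Choosable.ones_lt {a q : ℕ} {f : Fin a ⊕ Fin q → ℕ}
    (hf : Choosable (completeBipartiteGraph (Fin a) (Fin q)) f) (u : Fin a) :
    (univ.filter fun v : Fin q => f (Sum.inr v) = 1).card < f (Sum.inl u) := by
  by_contra! hle
  set W := univ.filter fun v : Fin q => f (Sum.inr v) = 1 with hW
  let e : Fin q ↪ ℕ := Fin.valEmbedding
  obtain ⟨c, hc, hadj⟩ := hf.exists_coloring (C := ℕ)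
    (Sum.elim (fun u' => if u' = u then W.map e else Finset.range (f (Sum.inl u')))
      (fun v => if v ∈ W then {e v} else Finset.range (f (Sum.inr v)))) (by
      rintro (u' | v)
      · simp only [Sum.elim_inl]
        split_ifs with h
        · subst h; simpa using hle
        · simp
      · simp only [Sum.elim_inr]
        split_ifs with h
        · simpa using (Finset.mem_filter.mp h).2.le
        · simp)
  have h1 := hc (Sum.inl u)
  simp only [Sum.elim_inl, if_true, Finset.mem_map] at h1
  obtain ⟨v, hv, hvc⟩ := h1
  have h2 := hc (Sum.inr v)
  simp only [Sum.elim_inr, if_pos hv, Finset.mem_singleton] at h2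
  exact hadj (Sum.inl u) (Sum.inr v) (by simp) (by rw [← hvc, h2])

/-- The bad list assignment. The color pairs on the `q` side are the edges of `k` disjoint copies
of `K_{h,h}`, and the lists on the `a` side are the `2 ^ k` unions of one side of each copy. A set
of colors containing no edge misses a side of every copy, hence misses one of those lists. -/
lemma Choosable.not_many_short {a q : ℕ} {f : Fin a ⊕ Fin q → ℕ}
    (hf : Choosable (completeBipartiteGraph (Fin a) (Fin q)) f) (k h : ℕ)
    (hA : 2 ^ k ≤ (univ.filter fun u : Fin a => f (Sum.inl u) ≤ k * h).card)
    (hQ : k * h ^ 2 ≤ (univ.filter fun v : Fin q => f (Sum.inr v) ≤ 2).card) : False := by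
  obtain ⟨e⟩ : Nonempty ((Fin k → Bool) ↪ {u : Fin a // f (Sum.inl u) ≤ k * h}) := by
    apply Function.Embedding.nonempty_of_card_le
    rw [Fintype.card_subtype]
    simpa using hA
  obtain ⟨g⟩ : Nonempty ((Fin k × Fin h × Fin h) ↪ {v : Fin q // f (Sum.inr v) ≤ 2}) := by
    apply Function.Embedding.nonempty_of_card_le
    rw [Fintype.card_subtype]
    simpa [sq] using hQ
  have he : Function.Injective fun ε => (e ε).1 := Subtype.val_injective.comp e.injective
  have hg : Function.Injective fun t => (g t).1 := Subtype.val_injective.comp g.injective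
  let side (ε : Fin k → Bool) : Finset (ℕ × Bool × ℕ) :=
    (univ : Finset (Fin k × Fin h)).image fun t => ((t.1 : ℕ), ε t.1, (t.2 : ℕ))
  let pair (t : Fin k × Fin h × Fin h) : Finset (ℕ × Bool × ℕ) :=
    {((t.1 : ℕ), false, (t.2.1 : ℕ)), ((t.1 : ℕ), true, (t.2.2 : ℕ))}
  have hside : ∀ ε, (side ε).card = k * h := by
    intro ε
    simp only [side]
    rw [Finset.card_image_of_injective]
    · simp
    · rintro ⟨i, j⟩ ⟨i', j'⟩ hij
      simp only [Prod.mk.injEq] at hij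
      exact Prod.ext (Fin.ext hij.1) (Fin.ext hij.2.2)
  have hpair : ∀ t, (pair t).card = 2 := fun t => Finset.card_pair (by simp)
  have hfill : ∀ n : ℕ, ∃ s : Finset (ℕ × Bool × ℕ), s.card = n :=
    fun n => Infinite.exists_subset_card_eq _ n
  choose fill hfill using hfill
  obtain ⟨c, hc, hadj⟩ := hf.exists_coloring
    (Sum.elim (Function.extend (fun ε => (e ε).1) side (fun u => fill (f (Sum.inl u))))
      (Function.extend (fun t => (g t).1) pair (fun v => fill (f (Sum.inr v))))) (by
      rintro (u | v)
      · simp only [Sum.elim_inl]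
        by_cases hu : ∃ ε, (e ε).1 = u
        · obtain ⟨ε, rfl⟩ := hu
          rw [he.extend_apply, hside]
          exact (e ε).2
        · rw [Function.extend_apply' _ _ _ hu, hfill]
      · simp only [Sum.elim_inr]
        by_cases hv : ∃ t, (g t).1 = v
        · obtain ⟨t, rfl⟩ := hv
          rw [hg.extend_apply, hpair]
          exact (g t).2
        · rw [Function.extend_apply' _ _ _ hv, hfill])
  have hcA : ∀ ε, c (Sum.inl (e ε).1) ∈ side ε := by
    intro ε
    have := hc (Sum.inl (e ε).1)
    rwa [Sum.elim_inl, he.extend_apply] at this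
  have hcQ : ∀ t, c (Sum.inr (g t).1) ∈ pair t := by
    intro t
    have := hc (Sum.inr (g t).1)
    rwa [Sum.elim_inr, hg.extend_apply] at this
  have hmiss : ∀ j : Fin k, ∃ b : Bool, ∀ ε, ∀ i : Fin h,
      c (Sum.inl (e ε).1) ≠ ((j : ℕ), b, (i : ℕ)) := by
    intro j
    by_contra! hcon
    obtain ⟨ε, i, h1⟩ := hcon false
    obtain ⟨ε', i', h2⟩ := hcon true
    have h3 := hcQ (j, i, i')
    simp only [pair, Finset.mem_insert, Finset.mem_singleton] at h3
    rcases h3 with h3 | h3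
    · exact hadj (Sum.inl (e ε).1) (Sum.inr (g (j, i, i')).1) (by simp) (by rw [h1, h3])
    · exact hadj (Sum.inl (e ε').1) (Sum.inr (g (j, i, i')).1) (by simp) (by rw [h2, h3])
  choose b hb using hmiss
  have h4 := hcA b
  simp only [side, Finset.mem_image, Finset.mem_univ, true_and] at h4
  obtain ⟨⟨j, i⟩, hji⟩ := h4
  exact hb j b i hji.symm

/-- The values of `k` and `h` used in the bad list assignment: `k` is of order `log a` and
`k * h` of order `√(q log a)`. -/
lemma exists_parameters {a q B : ℕ} (ha : 2 ≤ a)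
    (hq : 4 * (a : ℝ) ^ 2 * Real.log a ≤ (q : ℝ)) (hB : q < 2 * B) :
    ∃ k h : ℕ, 2 ^ k ≤ a / 2 + 1 ∧ k * h ^ 2 ≤ B ∧
      Real.sqrt (q * Real.log a) ≤ 5 * ((k : ℝ) * h) := by
  have haR : (2 : ℝ) ≤ a := by exact_mod_cast ha
  have hl0 : 0 < Real.log a := Real.log_pos (by linarith)
  have hl2 : 1 / 2 < Real.log a := by
    have := Real.log_two_gt_d9
    have := Real.log_le_log (by norm_num) haR
    linarith
  set k := Nat.log 2 (a / 2 + 1) with hk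
  have hk1 : 1 ≤ k := by
    rw [hk]
    exact Nat.log_pos (by norm_num) (by omega)
  have hk2 : 2 ^ k ≤ a / 2 + 1 := Nat.pow_log_le_self 2 (by omega)
  have hk3 : a / 2 + 1 < 2 ^ (k + 1) := Nat.lt_pow_succ_log_self (by norm_num) _
  have hkB : k ≤ B := by
    have h1 : k < 2 ^ k := Nat.lt_two_pow_self
    have h2 : (2 * a : ℝ) ≤ q := by nlinarith
    have h3 : 2 * a ≤ q := by exact_mod_cast h2
    omega
  have hloga : Real.log a ≤ 3 * k := by
    have h1 : a ≤ 2 ^ (k + 2) := by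
      rw [pow_succ]
      omega
    have h2 : (a : ℝ) ≤ 2 ^ (k + 2) := by exact_mod_cast h1
    have h3 := Real.log_le_log (by linarith) h2
    rw [Real.log_pow] at h3
    push_cast at h3
    have h4 := Real.log_two_lt_d9
    have h5 : (1 : ℝ) ≤ k := by exact_mod_cast hk1
    nlinarith
  refine ⟨k, Nat.sqrt (B / k), hk2, ?_, ?_⟩
  · calc k * Nat.sqrt (B / k) ^ 2 ≤ k * (B / k) := Nat.mul_le_mul_left _ (Nat.sqrt_le' _)
      _ ≤ B := Nat.mul_div_le B k
  · set h := Nat.sqrt (B / k) with hh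
    have hh1 : 1 ≤ h := Nat.sqrt_pos.mpr (Nat.div_pos hkB hk1)
    have h1 : B / k < (h + 1) ^ 2 := Nat.lt_succ_sqrt' _
    have h2 : B < k * (h + 1) ^ 2 := by
      rw [Nat.div_lt_iff_lt_mul hk1] at h1
      rwa [mul_comm]
    have h3 : B < k * (4 * h ^ 2) := by
      refine lt_of_lt_of_le h2 (Nat.mul_le_mul_left _ ?_)
      nlinarith
    have h3' : (q : ℝ) ≤ 8 * (k * h ^ 2) := by
      have : q ≤ 8 * (k * h ^ 2) := by nlinarith
      exact_mod_cast this
    apply Real.sqrt_le_iff.mpr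
    refine ⟨by positivity, ?_⟩
    calc (q : ℝ) * Real.log a ≤ (8 * (k * h ^ 2)) * (3 * k) := by gcongr
      _ ≤ (5 * ((k : ℝ) * h)) ^ 2 := by
        have : 0 ≤ ((k : ℝ) * h) ^ 2 := by positivity
        nlinarith

lemma Choosable.lower {a q : ℕ} (ha : 2 ≤ a)
    (hq : 4 * (a : ℝ) ^ 2 * Real.log a ≤ (q : ℝ)) {f : Fin a ⊕ Fin q → ℕ}
    (hf : Choosable (completeBipartiteGraph (Fin a) (Fin q)) f) :
    2 * (q : ℝ) + 1 / 20 * a * Real.sqrt (q * Real.log a) ≤ ((∑ v, f v : ℕ) : ℝ) := by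
  have haR : (2 : ℝ) ≤ a := by exact_mod_cast ha
  have hl0 : 0 < Real.log a := Real.log_pos (by linarith)
  rw [Fintype.sum_sum_type]
  set R := Real.sqrt (q * Real.log a) with hR
  have hR0 : 0 ≤ R := Real.sqrt_nonneg _
  set W := (univ.filter fun v : Fin q => f (Sum.inr v) = 1).card with hW
  set B := (univ.filter fun v : Fin q => f (Sum.inr v) ≤ 2).card with hB
  set SA := ∑ u, f (Sum.inl u) with hSA
  set SQ := ∑ v, f (Sum.inr v) with hSQ
  have hSQ3 : 3 * q ≤ SQ + W + B := by
    have e : ∀ v : Fin q, 3 ≤ f (Sum.inr v) + (if f (Sum.inr v) = 1 then 1 else 0)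
        + (if f (Sum.inr v) ≤ 2 then 1 else 0) := by
      intro v
      have := hf.pos (Sum.inr v)
      split_ifs <;> omega
    have := Finset.sum_le_sum fun v (_ : v ∈ (univ : Finset (Fin q))) => e v
    rw [Finset.sum_add_distrib, Finset.sum_add_distrib] at this
    simp only [Finset.sum_const, Finset.card_univ, Fintype.card_fin, smul_eq_mul,
      Finset.sum_boole, Nat.cast_id] at this
    omega
  have hBq : B ≤ q := by
    have := Finset.card_filter_le (univ : Finset (Fin q)) fun v => f (Sum.inr v) ≤ 2
    simpa using this
  have hSAW : a * W ≤ SA := by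
    have := Finset.card_nsmul_le_sum (univ : Finset (Fin a)) (fun u => f (Sum.inl u)) W
      (fun u _ => (hf.ones_lt u).le)
    simpa using this
  have hSAW2 : 2 * W ≤ SA := le_trans (Nat.mul_le_mul_right _ ha) hSAW
  have hSAW' : 2 * (W : ℝ) ≤ SA := by exact_mod_cast hSAW2
  push_cast
  rcases le_or_gt (2 * B) q with hcase | hcase
  · -- Half of the `q` side has lists of size at least three, and `a * R ≤ q / 2`.
    have haRq : a * R ≤ q / 2 := by
      rw [hR, ← Real.sqrt_sq (show (0 : ℝ) ≤ a by linarith), ← Real.sqrt_mul (by positivity)]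
      apply Real.sqrt_le_iff.mpr
      refine ⟨by positivity, ?_⟩
      rw [Real.sqrt_sq (by positivity)]
      have hq0 : (0 : ℝ) ≤ q := by positivity
      nlinarith [mul_le_mul_of_nonneg_left hq hq0]
    have h1 : 5 * q ≤ 2 * SQ + 2 * SA := by omega
    have h1' : 5 * (q : ℝ) ≤ 2 * SQ + 2 * SA := by exact_mod_cast h1
    have : 0 ≤ a * R := by positivity
    linarith
  · obtain ⟨k, h, hk, hkh, hRk⟩ := exists_parameters ha hq hcase
    have hlong : a ≤ 2 * (univ.filter fun u : Fin a => ¬ f (Sum.inl u) ≤ k * h).card := by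
      have h1 : (univ.filter fun u : Fin a => f (Sum.inl u) ≤ k * h).card < 2 ^ k := by
        by_contra! hcon
        exact hf.not_many_short k h hcon hkh
      have h2 := Finset.card_filter_add_card_filter_not (s := (univ : Finset (Fin a)))
        (fun u : Fin a => f (Sum.inl u) ≤ k * h)
      rw [Finset.card_univ, Fintype.card_fin] at h2
      omega
    have hSA2 : a * (k * h) ≤ 2 * SA := by
      have h1 := Finset.card_nsmul_le_sum
        (univ.filter fun u : Fin a => ¬ f (Sum.inl u) ≤ k * h) (fun u => f (Sum.inl u)) (k * h)
        (fun u hu => (not_le.mp (Finset.mem_filter.mp hu).2).le)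
      have h2 : ∑ u ∈ univ.filter (fun u : Fin a => ¬ f (Sum.inl u) ≤ k * h), f (Sum.inl u)
          ≤ SA := Finset.sum_le_sum_of_subset (Finset.filter_subset _ _)
      rw [smul_eq_mul] at h1
      nlinarith
    have hSA2' : (a : ℝ) * (k * h) ≤ 2 * SA := by exact_mod_cast hSA2
    have h1 : 2 * q ≤ SQ + W := by omega
    have h1' : 2 * (q : ℝ) ≤ SQ + W := by exact_mod_cast h1
    have h2 : a * R ≤ a * (5 * ((k : ℝ) * h)) := by gcongr
    linarith

/-- Theorem 2 (main theorem): there are positive constants `c₁, c₂` such that for all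
`a ≥ 2` and `q ≥ 4a² log a`,
`2q + c₁·a·√(q·log a) ≤ χ_sc(K_{a,q}) ≤ 2q + c₂·a·√(q·log a)`. -/
theorem sumChoice_completeBipartite_bounds :
    ∃ c₁ c₂ : ℝ, 0 < c₁ ∧ 0 < c₂ ∧
      ∀ a q : ℕ, 2 ≤ a → 4 * (a : ℝ) ^ 2 * Real.log a ≤ (q : ℝ) →
        2 * (q : ℝ) + c₁ * a * Real.sqrt (q * Real.log a)
            ≤ (sumChoice (completeBipartiteGraph (Fin a) (Fin q)) : ℝ) ∧
        (sumChoice (completeBipartiteGraph (Fin a) (Fin q)) : ℝ)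
            ≤ 2 * (q : ℝ) + c₂ * a * Real.sqrt (q * Real.log a) := by
  refine ⟨1 / 20, 13, by norm_num, by norm_num, fun a q ha hq => ?_⟩
  have hup := choosable_upper ha hq
  constructor
  · obtain ⟨f, hf, hsum⟩ := Nat.sInf_mem
      (s := {n : ℕ | ∃ f : Fin a ⊕ Fin q → ℕ,
        Choosable (completeBipartiteGraph (Fin a) (Fin q)) f ∧ ∑ v, f v = n}) ⟨_, _, hup, rfl⟩
    unfold sumChoice
    rw [← hsum]
    exact hf.lower ha hq
  · have hle : sumChoice (completeBipartiteGraph (Fin a) (Fin q))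
        ≤ a * ⌈12 * Real.sqrt (q * Real.log a)⌉₊ + q * 2 :=
      Nat.sInf_le ⟨_, hup, by simp⟩
    have hle' : (sumChoice (completeBipartiteGraph (Fin a) (Fin q)) : ℝ)
        ≤ a * (⌈12 * Real.sqrt (q * Real.log a)⌉₊ : ℝ) + q * 2 := by exact_mod_cast hle
    have haR : (2 : ℝ) ≤ a := by exact_mod_cast ha
    have hl : 1 / 2 < Real.log a := by
      have := Real.log_two_gt_d9
      have := Real.log_le_log (by norm_num) haR
      linarith
    -- Rounding up costs at most one further multiple of the square root.
    have hR : 1 ≤ Real.sqrt (q * Real.log a) := by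
      rw [Real.one_le_sqrt]
      have h2 : (2 : ℝ) ≤ q := by nlinarith
      nlinarith
    have hceil := (Nat.ceil_lt_add_one
      (show 0 ≤ 12 * Real.sqrt (q * Real.log a) by positivity)).le
    have : (a : ℝ) * (⌈12 * Real.sqrt (q * Real.log a)⌉₊ : ℝ)
        ≤ a * (13 * Real.sqrt (q * Real.log a)) := by
      gcongr
      linarith
    linarith
end

section
/- For all integers a and q with q ≥ a ≥ 2, the sum choice number of the complete bipartite graph satisfies χ_sc(K_{a,q}) ≤ 2q + a·⌈√(32·q·(1 + log a))⌉. -/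
/-!
The witness assigns lists of size `2` on the side `Q` and of size
`k = ⌈√(32 q (1 + log a))⌉` on the side `A`.

Reserve a set `S` of colors for `A`. A vertex of `Q` is bad if its list lies inside `S`; deleting
one color of each bad list from `S` leaves a set avoidable by every vertex of `Q`. So a proper
coloring exists as soon as every list on `A` meets `S` in more colors than there are bad vertices
(`exists_coloring_of_reserved`).

If `k > 4q`, the complement of all lists on `Q` serves as `S`. Otherwise put each color in `S`
independently with probability `p = k / (4q)`. The expected number of bad vertices is
`q p² = pk / 4`, so by Markov it reaches `pk / 2` with probability at most `1/2`. By Chernoff,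
a given list on `A` meets `S` in at most `pk / 2` colors with probability at most
`exp (-pk / 8) ≤ 1 / (e a)`. Since `1/2 + 1/e < 1`, a suitable `S` exists. Both tail bounds are
packed into one potential function whose average over `S` is less than `1`
(`exists_reserved_set`); averages are weighted sums over subsets, evaluated with
`Finset.prod_add`.
-/

open SimpleGraph Finset

/-- Reserving `S` for `A` works if each list on `A` has more colors in `S` than there are
lists on `Q` contained in `S`. -/
lemma exists_coloring_of_reserved {a q : ℕ} (L : Fin a ⊕ Fin q → Finset ℕ)
    (hM : ∀ j, (L (Sum.inr j)).Nonempty) (S : Finset ℕ)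
    (hS : ∀ u, #{j : Fin q | L (Sum.inr j) ⊆ S} < #(L (Sum.inl u) ∩ S)) :
    ∃ c : Fin a ⊕ Fin q → ℕ, (∀ v, c v ∈ L v) ∧
      ∀ u v, (completeBipartiteGraph (Fin a) (Fin q)).Adj u v → c u ≠ c v := by
  choose x hx using hM
  set T := ({j : Fin q | L (Sum.inr j) ⊆ S} : Finset (Fin q)).image x with hT
  have h1 : ∀ u, ∃ y ∈ L (Sum.inl u) ∩ S, y ∉ T := fun u =>
    exists_mem_notMem_of_card_lt_card (card_image_le.trans_lt (hS u))
  have h2 : ∀ j, ∃ y ∈ L (Sum.inr j), y ∉ S ∨ y ∈ T := by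
    intro j
    by_cases h : L (Sum.inr j) ⊆ S
    · exact ⟨x j, hx j, Or.inr (mem_image_of_mem x (by simpa using h))⟩
    · obtain ⟨y, hy, hyS⟩ := not_subset.1 h
      exact ⟨y, hy, Or.inl hyS⟩
  choose y hy hyT using h1
  choose z hz hzT using h2
  have key : ∀ u j, y u ≠ z j := by
    intro u j h
    have h3 := hzT j
    rw [← h] at h3
    exact h3.elim (fun h4 => h4 (mem_inter.1 (hy u)).2) (hyT u)
  refine ⟨Sum.elim y z, ?_, ?_⟩
  · rintro (u | j)
    · exact (mem_inter.1 (hy u)).1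
    · exact hz j
  · rintro (u | j) (v | i) h
    · simp at h
    · exact key u i
    · exact (key v j).symm
    · simp at h

/-- The probability of the set `S` when every element of `U` is selected independently with
probability `p`. -/
def bernoulliWeight (p : ℝ) (U S : Finset ℕ) : ℝ :=
  (∏ _i ∈ S, p) * ∏ _i ∈ U \ S, (1 - p)

lemma sum_bernoulliWeight (p : ℝ) (U : Finset ℕ) :
    ∑ S ∈ U.powerset, bernoulliWeight p U S = 1 := by
  have h := prod_add (fun _ : ℕ => p) (fun _ => 1 - p) U
  simp only [bernoulliWeight]
  rw [← h]
  simp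

/-- The probability that a random set contains `M`. -/
lemma sum_bernoulliWeight_subset (p : ℝ) {U M : Finset ℕ} (hM : M ⊆ U) :
    ∑ S ∈ U.powerset, bernoulliWeight p U S * (if M ⊆ S then 1 else 0) = p ^ #M := by
  have h := prod_add (fun _ : ℕ => p) (fun i => (1 - p) * (if i ∈ M then 0 else 1)) U
  have h2 : ∏ i ∈ U, (p + (1 - p) * (if i ∈ M then 0 else 1)) = p ^ #M := by
    rw [← inter_eq_right.2 hM, ← prod_const, ← filter_mem_eq_inter, prod_filter]
    refine prod_congr rfl fun i hi => ?_
    by_cases hiM : i ∈ M <;> simp [hiM, hi]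
  rw [← h2, h]
  refine sum_congr rfl fun S hS => ?_
  rw [bernoulliWeight, prod_mul_distrib, mul_assoc]
  congr 2
  split_ifs with hMS
  · refine (prod_eq_one fun i hi => ?_).symm
    rw [if_neg fun hiM => (mem_sdiff.1 hi).2 (hMS hiM)]
  · obtain ⟨i, hi, hiS⟩ := not_subset.1 hMS
    exact (prod_eq_zero (mem_sdiff.2 ⟨hM hi, hiS⟩) (by simp [hi])).symm

/-- The moment generating function of `#(N ∩ S)`, evaluated at `-log 2`. -/
lemma sum_bernoulliWeight_half_pow (p : ℝ) {U N : Finset ℕ} (hN : N ⊆ U) :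
    ∑ S ∈ U.powerset, bernoulliWeight p U S * (1 / 2 : ℝ) ^ #(N ∩ S) = (1 - p / 2) ^ #N := by
  have h := prod_add (fun i : ℕ => p * (if i ∈ N then 1 / 2 else 1)) (fun _ => 1 - p) U
  have h2 : ∏ i ∈ U, (p * (if i ∈ N then 1 / 2 else 1) + (1 - p)) = (1 - p / 2) ^ #N := by
    rw [← inter_eq_right.2 hN, ← prod_const, ← filter_mem_eq_inter, prod_filter]
    refine prod_congr rfl fun i hi => ?_
    by_cases hiN : i ∈ N
    · simp only [mem_filter, hi, hiN, and_self, if_true]; ring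
    · simp [hiN]
  rw [← h2, h]
  refine sum_congr rfl fun S hS => ?_
  have h3 : ∏ i ∈ S, (if i ∈ N then (1 / 2 : ℝ) else 1) = (1 / 2) ^ #(N ∩ S) := by
    rw [inter_comm, ← prod_const, ← filter_mem_eq_inter, prod_filter]
  rw [bernoulliWeight, prod_mul_distrib, h3]
  ring

/-- The Chernoff bound for the probability that a binomial variable with parameters `k` and `p`
is at most half its mean `pk`. The factor `(1 - p / 2) ^ k` is its moment generating function at
`-log 2`. -/
lemma two_rpow_mul_le_exp {p : ℝ} (hp0 : 0 ≤ p) (hp1 : p ≤ 1) (k : ℕ) :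
    (2 : ℝ) ^ (p * k / 2) * (1 - p / 2) ^ k ≤ Real.exp (-(p * k / 8)) := by
  have h1 : (1 - p / 2) ^ k ≤ Real.exp (-(p * k / 2)) := by
    calc (1 - p / 2) ^ k ≤ (Real.exp (-(p / 2))) ^ k := by
          refine pow_le_pow_left₀ (by linarith) ?_ k
          have := Real.add_one_le_exp (-(p / 2))
          linarith
      _ = Real.exp (-(p * k / 2)) := by
          rw [← Real.exp_nat_mul]; congr 1; ring
  have hm : 0 ≤ p * k := by positivity
  calc (2 : ℝ) ^ (p * k / 2) * (1 - p / 2) ^ k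
      ≤ (2 : ℝ) ^ (p * k / 2) * Real.exp (-(p * k / 2)) := by gcongr
    _ = Real.exp (Real.log 2 * (p * k / 2) - p * k / 2) := by
        rw [Real.rpow_def_of_pos two_pos, ← Real.exp_add]; rfl
    _ ≤ Real.exp (-(p * k / 8)) := by
        refine Real.exp_le_exp.2 ?_
        -- `log 2 ≤ 3 / 4` suffices
        nlinarith [Real.log_two_lt_d9]

lemma exists_reserved_set {a q k : ℕ} (ha : 2 ≤ a) (hq : 0 < q) (hk0 : 0 < k)
    (hkq : k ≤ 4 * q) (hk : 32 * (q : ℝ) * (1 + Real.log a) ≤ (k : ℝ) ^ 2)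
    (N : Fin a → Finset ℕ) (M : Fin q → Finset ℕ)
    (hN : ∀ u, #(N u) = k) (hM : ∀ j, #(M j) = 2) :
    ∃ S : Finset ℕ, ∀ u, #{j : Fin q | M j ⊆ S} < #(N u ∩ S) := by
  set U : Finset ℕ := univ.biUnion N ∪ univ.biUnion M with hU
  have hNU : ∀ u, N u ⊆ U := fun u =>
    (subset_biUnion_of_mem N (mem_univ u)).trans subset_union_left
  have hMU : ∀ j, M j ⊆ U := fun j =>
    (subset_biUnion_of_mem M (mem_univ j)).trans subset_union_right
  have hq' : (0 : ℝ) < q := by exact_mod_cast hq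
  have hk' : (0 : ℝ) < k := by exact_mod_cast hk0
  have ha' : (0 : ℝ) < a := by positivity
  obtain ⟨p, hp⟩ : ∃ p : ℝ, p = k / (4 * q) := ⟨_, rfl⟩
  have hp0 : 0 < p := by rw [hp]; positivity
  have hp1 : p ≤ 1 := by
    rw [hp, div_le_one (by positivity)]; exact_mod_cast hkq
  have hpq : 4 * (q * p) = k := by rw [hp]; field_simp
  have hpk : 8 * (1 + Real.log a) ≤ p * k := by
    rw [hp, div_mul_eq_mul_div, le_div_iff₀ (by positivity)]; nlinarith
  have hm : 0 < p * k := by positivity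
  -- The potential: its first term reaches `1` when there are at least `pk / 2` bad lists,
  -- and its `u`-th summand does so when `N u` meets `S` in at most `pk / 2` colors.
  obtain ⟨Φ, hΦ⟩ : ∃ Φ : Finset ℕ → ℝ, ∀ S, Φ S =
      2 / (p * k) * (∑ j, if M j ⊆ S then (1 : ℝ) else 0) +
        ∑ u, (2 : ℝ) ^ (p * k / 2) * (1 / 2) ^ #(N u ∩ S) := ⟨_, fun _ => rfl⟩
  have hE : ∑ S ∈ U.powerset, bernoulliWeight p U S * Φ S < 1 := by
    have e1 : ∑ S ∈ U.powerset, bernoulliWeight p U S * Φ S =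
        2 / (p * k) * (∑ j, p ^ #(M j)) +
          ∑ u, (2 : ℝ) ^ (p * k / 2) * (1 - p / 2) ^ #(N u) := by
      simp only [← sum_bernoulliWeight_subset p (hMU _),
        ← sum_bernoulliWeight_half_pow p (hNU _), hΦ, mul_add, sum_add_distrib, mul_sum]
      congr 1
      · rw [sum_comm]
        exact sum_congr rfl fun j _ => sum_congr rfl fun S _ => by ring
      · rw [sum_comm]
        exact sum_congr rfl fun j _ => sum_congr rfl fun S _ => by ring
    have e2 : 2 / (p * k) * (∑ j, p ^ #(M j)) = 1 / 2 := by
      simp only [hM, sum_const, card_univ, Fintype.card_fin, nsmul_eq_mul]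
      rw [← hpq]
      field_simp
      norm_num
    have e3 : ∑ u, (2 : ℝ) ^ (p * k / 2) * (1 - p / 2) ^ #(N u) ≤ Real.exp (-1) := by
      simp only [hN, sum_const, card_univ, Fintype.card_fin, nsmul_eq_mul]
      calc (a : ℝ) * ((2 : ℝ) ^ (p * k / 2) * (1 - p / 2) ^ k)
          ≤ a * Real.exp (-1 - Real.log a) := by
            gcongr
            refine (two_rpow_mul_le_exp hp0.le hp1 k).trans (Real.exp_le_exp.2 ?_)
            linarith
        _ = Real.exp (-1) := by
            rw [Real.exp_sub, Real.exp_log ha']; field_simp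
    have e4 : Real.exp (-1) < 1 / 2 := by
      have := Real.exp_neg_one_lt_d9
      linarith
    rw [e1, e2]
    linarith
  obtain ⟨S, hSU, hS⟩ : ∃ S ∈ U.powerset, Φ S < 1 := by
    by_contra! hcon
    have : ∑ S ∈ U.powerset, bernoulliWeight p U S ≤
        ∑ S ∈ U.powerset, bernoulliWeight p U S * Φ S := by
      refine sum_le_sum fun S hS => le_mul_of_one_le_right ?_ (hcon S hS)
      exact mul_nonneg (prod_nonneg fun _ _ => hp0.le) (prod_nonneg fun _ _ => by linarith)
    rw [sum_bernoulliWeight] at this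
    linarith
  rw [hΦ] at hS
  have hB : (∑ j, if M j ⊆ S then (1 : ℝ) else 0) = #{j : Fin q | M j ⊆ S} := by simp
  rw [hB] at hS
  have hpos : ∀ u, 0 ≤ (2 : ℝ) ^ (p * k / 2) * (1 / 2) ^ #(N u ∩ S) := fun u => by positivity
  refine ⟨S, fun u => ?_⟩
  have hbad : (#{j : Fin q | M j ⊆ S} : ℝ) < p * k / 2 := by
    have h1 : 2 / (p * k) * (#{j : Fin q | M j ⊆ S} : ℝ) < 1 := by
      have := sum_nonneg fun u (_ : u ∈ (univ : Finset (Fin a))) => hpos u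
      linarith
    rw [div_mul_eq_mul_div, div_lt_one hm] at h1
    linarith
  have hgood : p * k / 2 < (#(N u ∩ S) : ℝ) := by
    have h1 : (2 : ℝ) ^ (p * k / 2) * (1 / 2) ^ #(N u ∩ S) < 1 := by
      have h2 := single_le_sum (fun u _ => hpos u) (mem_univ u)
      have h3 : 0 ≤ 2 / (p * k) * (#{j : Fin q | M j ⊆ S} : ℝ) := by positivity
      linarith
    rw [one_div, inv_pow, ← div_eq_mul_inv, div_lt_one (by positivity),
      ← Real.rpow_natCast] at h1
    exact (Real.rpow_lt_rpow_left_iff one_lt_two).1 h1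
  exact_mod_cast hbad.trans hgood

/-- Theorem 4 (upper bound): for `q ≥ a ≥ 2`,
`χ_sc(K_{a,q}) ≤ 2q + a·⌈√(32·q·(1 + log a))⌉`. -/
theorem sumChoice_completeBipartite_upper (a q : ℕ) (ha : 2 ≤ a) (haq : a ≤ q) :
    (sumChoice (completeBipartiteGraph (Fin a) (Fin q)) : ℝ)
      ≤ 2 * (q : ℝ) +
        (a : ℝ) * ((⌈Real.sqrt (32 * (q : ℝ) * (1 + Real.log a))⌉ : ℤ) : ℝ) := by
  have hq : 0 < q := by omega
  have hlog : 0 ≤ Real.log a := Real.log_natCast_nonneg a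
  have hr : 0 < 32 * (q : ℝ) * (1 + Real.log a) := by positivity
  rw [← natCast_ceil_eq_intCast_ceil (Real.sqrt_nonneg _)]
  set k := ⌈Real.sqrt (32 * (q : ℝ) * (1 + Real.log a))⌉₊ with hkdef
  have hk0 : 0 < k := Nat.ceil_pos.2 (Real.sqrt_pos.2 hr)
  have hk : 32 * (q : ℝ) * (1 + Real.log a) ≤ (k : ℝ) ^ 2 :=
    (Real.sqrt_le_left (Nat.cast_nonneg k)).1 (Nat.le_ceil _)
  have hch : Choosable (completeBipartiteGraph (Fin a) (Fin q))
      (Sum.elim (fun _ => k) (fun _ => 2)) := by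
    intro L hL
    have hN : ∀ u, #(L (Sum.inl u)) = k := fun u => hL (Sum.inl u)
    have hM : ∀ j, #(L (Sum.inr j)) = 2 := fun j => hL (Sum.inr j)
    have hne : ∀ j, (L (Sum.inr j)).Nonempty := fun j =>
      card_pos.1 (by rw [hM j]; norm_num)
    obtain ⟨S, hS⟩ : ∃ S : Finset ℕ,
        ∀ u, #{j : Fin q | L (Sum.inr j) ⊆ S} < #(L (Sum.inl u) ∩ S) := by
      rcases le_or_gt k (4 * q) with hkq | hkq
      · exact exists_reserved_set ha hq hk0 hkq hk _ _ hN hM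
      · set W := univ.biUnion fun j => L (Sum.inr j) with hW
        have hWc : #W ≤ q * 2 := by
          simpa using card_biUnion_le_card_mul univ (fun j => L (Sum.inr j)) 2
            fun j _ => (hM j).le
        refine ⟨(univ.biUnion fun u => L (Sum.inl u)) \ W, fun u => ?_⟩
        have h0 : #{j : Fin q | L (Sum.inr j) ⊆
            (univ.biUnion fun u => L (Sum.inl u)) \ W} = 0 := by
          rw [card_eq_zero, filter_eq_empty_iff]
          intro j _ hj
          obtain ⟨x, hx⟩ := hne j
          exact (mem_sdiff.1 (hj hx)).2 (mem_biUnion.2 ⟨j, mem_univ j, hx⟩)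
        rw [h0, card_pos]
        obtain ⟨x, hx, hxW⟩ := exists_mem_notMem_of_card_lt_card
          (s := W) (t := L (Sum.inl u)) (by rw [hN u]; omega)
        exact ⟨x, mem_inter.2 ⟨hx, mem_sdiff.2 ⟨mem_biUnion.2 ⟨u, mem_univ u, hx⟩, hxW⟩⟩⟩
    exact exists_coloring_of_reserved L hne S hS
  have hle : sumChoice (completeBipartiteGraph (Fin a) (Fin q)) ≤ 2 * q + a * k := by
    refine Nat.sInf_le ⟨_, hch, ?_⟩
    simp only [Fintype.sum_sum_type, Sum.elim_inl, Sum.elim_inr, sum_const, card_univ,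
      Fintype.card_fin, smul_eq_mul]
    ring
  exact_mod_cast hle
end

section
/- Let t ≥ 2 and ℓ ≥ 1 be integers, and set a = 2^t and q = t·ℓ². Then there exists an f-assignment L of the complete bipartite graph K_{a,q}, where f(v) = t·ℓ for every v in the part A of size a and f(v) = 2 for every v in the part Q of size q, such that K_{a,q} is not L-choosable. -/
open SimpleGraph Finset

/-!
The colors are the vertices of `t` disjoint copies of `K_{ℓ,ℓ}`, the `i`-th copy having sides
`X i false` and `X i true`. The lists on `Q` are the `t·ℓ²` edges, and the lists on `A` are the
`2^t` unions `⋃ i, X i (s i)` for `s : Fin t → Bool`. In a proper coloring, every edge has an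
endpoint (the color of its vertex of `Q`) not used on `A`. Hence, for each `i`, the colors used on
`A` cannot meet both sides of the `i`-th copy, so they avoid some side `X i (s i)`. The vertex of
`A` with list `⋃ i, X i (s i)` then has no color available.
-/

theorem insufficient_assignment_exists (t ℓ : ℕ) (ht : 2 ≤ t) (hℓ : 1 ≤ ℓ) :
    ∃ L : (Fin (2 ^ t) ⊕ Fin (t * ℓ ^ 2)) → Finset ℕ,
      (∀ u : Fin (2 ^ t), (L (Sum.inl u)).card = t * ℓ) ∧
      (∀ v : Fin (t * ℓ ^ 2), (L (Sum.inr v)).card = 2) ∧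
      ¬∃ c : (Fin (2 ^ t) ⊕ Fin (t * ℓ ^ 2)) → ℕ,
          (∀ v, c v ∈ L v) ∧
          ∀ u v, (completeBipartiteGraph (Fin (2 ^ t)) (Fin (t * ℓ ^ 2))).Adj u v →
            c u ≠ c v := by
  -- `g (i, b, j)` is the color encoding the `j`-th vertex of the side `X i b`.
  obtain ⟨g, hg⟩ : ∃ g : Fin t × Bool × Fin ℓ → ℕ, Function.Injective g :=
    ⟨Encodable.encode, Encodable.encode_injective⟩
  have e : Fin (2 ^ t) ≃ (Fin t → Bool) := (Fintype.equivFinOfCardEq (by simp)).symm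
  have d : Fin (t * ℓ ^ 2) ≃ Fin t × Fin ℓ × Fin ℓ :=
    (Fintype.equivFinOfCardEq (by simp [sq])).symm
  refine ⟨Sum.elim
    (fun u => univ.image fun p : Fin t × Fin ℓ => g (p.1, e u p.1, p.2))
    (fun v => {g ((d v).1, false, (d v).2.1), g ((d v).1, true, (d v).2.2)}), ?_, ?_, ?_⟩
  · intro u
    rw [Sum.elim_inl, card_image_of_injective]
    · simp
    · rintro ⟨i, j⟩ ⟨i', j'⟩ h
      have h' := hg h
      simp only [Prod.mk.injEq] at h' ⊢
      exact ⟨h'.1, h'.2.2⟩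
  · intro v
    rw [Sum.elim_inr, card_pair]
    intro h
    simpa using hg h
  · rintro ⟨c, hc, hadj⟩
    have hne : ∀ u v, c (Sum.inl u) ≠ c (Sum.inr v) := fun u v => hadj _ _ (by simp)
    have avoid : ∀ i, ∃ b, ∀ j u, c (Sum.inl u) ≠ g (i, b, j) := by
      intro i
      by_contra! h
      obtain ⟨j, u, hu⟩ := h false
      obtain ⟨k, w, hw⟩ := h true
      have hv := hc (Sum.inr (d.symm (i, j, k)))
      simp only [Sum.elim_inr, Equiv.apply_symm_apply, mem_insert, mem_singleton] at hv
      rcases hv with hv | hv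
      · exact hne u _ (hu.trans hv.symm)
      · exact hne w _ (hw.trans hv.symm)
    choose s hs using avoid
    have hu := hc (Sum.inl (e.symm s))
    simp only [Sum.elim_inl, Equiv.apply_symm_apply, mem_image, mem_univ, true_and] at hu
    obtain ⟨⟨i, j⟩, h⟩ := hu
    exact hs i j _ h.symm
end

section
/- Fix an integer a ≥ 2. Then the limit lim_{q→∞} (χ_sc2(K_{a,q}) − 2q)/√q exists (as a finite real number), where χ_sc2(K_{a,q}) is the minimum of ∑_{v∈A∪Q} f(v) over all sufficient functions f with f(v) = 2 for every v ∈ Q. -/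
/-!
Write `χ_sc2(K_{a,q}) = 2q + g(q)` (`sumChoice2_eq`), where `g(q)` (`gmin a q`) is the least total list size on the part `A` that
forces a colouring when the `q` vertices of the other part carry lists of size two. The limit of
`g(q)/√q` exists because `g` is almost homogeneous under a blow-up. Replacing each colour by `k`
copies, and each two-element list `{u, v}` by the `k²` lists `{(u, x), (v, y)}`, turns an instance
with `q` pairs into one with `k² q` pairs, and a colouring of the blow-up projects to a colouring of
the original. Hence sizes `n i` that suffice for `t ≥ k² q` pairs give sizes `⌊n i / k⌋ + 1` that
suffice for `q` pairs (`Suff.blowup`), so that `k (g(q) - a) ≤ g(t)` (`gmin_blowup`).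

On the other hand `g(q) = O(√q)` (`gmin_le`): if all lists on `A` have size `N`, then a given pair
`{u, v}` is contained in the image of at most `a² N^(a-2)` of the `N^a` choices of colours on `A`,
so some choice avoids all `q` pairs as soon as `a² q < N²` (`suff_const`).

These two facts force `g(q)/√q` to converge to `sup_q (g(q) - a)/√q` (`tendsto_of_blowup`).
-/

open SimpleGraph Finset

/-- The sum choice number of `K_{a,q}` restricted to type II functions, i.e. those with
`f(v) = 2` for every vertex `v` of the part `Q`. -/
noncomputable def sumChoice2 (a q : ℕ) : ℕ :=
  sInf {n : ℕ | ∃ f : Fin a ⊕ Fin q → ℕ,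
    Choosable (completeBipartiteGraph (Fin a) (Fin q)) f ∧
    (∀ v : Fin q, f (Sum.inr v) = 2) ∧ ∑ v, f v = n}

/-! ### Reduction to the lists on the small part -/

/-- The list sizes `n` on `A` are sufficient against size-two lists indexed by `Q`: whatever the
lists, colours can be chosen on `A` so that every size-two list keeps an unused colour. -/
def Suff {a : ℕ} (n : Fin a → ℕ) (Q : Type) : Prop :=
  ∀ L : Fin a → Finset ℕ, (∀ i, (L i).card = n i) →
    ∀ M : Q → Finset ℕ, (∀ w, (M w).card = 2) →
      ∃ c : Fin a → ℕ, (∀ i, c i ∈ L i) ∧ ∀ w, ∃ x ∈ M w, ∀ i, c i ≠ x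

/-- The least total size on `A` of a sufficient type II function on `K_{a,q}`. -/
noncomputable def gmin (a q : ℕ) : ℕ :=
  sInf {s : ℕ | ∃ n : Fin a → ℕ, Suff n (Fin q) ∧ ∑ i, n i = s}

theorem choosable_iff_suff {a q : ℕ} (f : Fin a ⊕ Fin q → ℕ) (hf : ∀ v : Fin q, f (Sum.inr v) = 2) :
    Choosable (completeBipartiteGraph (Fin a) (Fin q)) f ↔
      Suff (fun i => f (Sum.inl i)) (Fin q) := by
  constructor
  · intro h L hL M hM
    obtain ⟨c, hc, hadj⟩ := h (Sum.elim L M) (by rintro (i | w) <;> simp [hL, hM, hf])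
    refine ⟨fun i => c (Sum.inl i), fun i => hc (Sum.inl i), fun w => ⟨c (Sum.inr w), hc (Sum.inr w), ?_⟩⟩
    intro i
    exact hadj _ _ (by simp [completeBipartiteGraph])
  · intro h L hL
    obtain ⟨c, hc, hM⟩ := h (fun i => L (Sum.inl i)) (fun i => hL _) (fun w => L (Sum.inr w))
      (fun w => by rw [hL, hf])
    choose x hx hne using hM
    refine ⟨Sum.elim c x, by rintro (i | w) <;> simp [hc, hx], ?_⟩
    rintro (i | w) (j | z) hadj
    · simp [completeBipartiteGraph] at hadj
    · exact hne z i
    · exact (hne w j).symm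
    · simp [completeBipartiteGraph] at hadj

/-! ### Blow-up of colours -/

theorem Suff.comp_surjective {a : ℕ} {n : Fin a → ℕ} {Q R : Type} (h : Suff n Q) (φ : Q → R)
    (hφ : Function.Surjective φ) : Suff n R := by
  intro L hL M hM
  obtain ⟨c, hc, hw⟩ := h L hL (fun w => M (φ w)) (fun w => hM _)
  refine ⟨c, hc, fun r => ?_⟩
  obtain ⟨w, rfl⟩ := hφ r
  exact hw w

theorem Suff.blowup {a q k t : ℕ} (hq : 1 ≤ q) (hk : 1 ≤ k) (hqk : q * k ^ 2 ≤ t)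
    {n : Fin a → ℕ} (h : Suff n (Fin t)) : Suff (fun i => n i / k + 1) (Fin q) := by
  have : NeZero q := ⟨by lia⟩
  have : NeZero k := ⟨by lia⟩
  obtain ⟨e⟩ : Nonempty (Fin q × Fin k × Fin k ↪ Fin t) :=
    Function.Embedding.nonempty_of_card_le (by simpa [sq] using hqk)
  replace h := h.comp_surjective _ (Function.invFun_surjective e.injective)
  intro L hL M hM
  choose u v huv hM' using fun w => Finset.card_eq_two.1 (hM w)
  -- The copy `x` of the colour `u` is encoded as `Nat.pair u x`.
  have hsub : ∀ i, ∃ s ⊆ (L i ×ˢ Finset.range k).image (fun p => Nat.pair p.1 p.2),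
      s.card = n i := by
    intro i
    apply Finset.exists_subset_card_eq
    rw [Finset.card_image_of_injective, Finset.card_product, hL, Finset.card_range]
    · have := Nat.div_add_mod (n i) k
      have := Nat.mod_lt (n i) hk
      nlinarith
    · rintro ⟨x, y⟩ ⟨x', y'⟩ hxy
      simpa [Nat.pair_eq_pair] using hxy
  choose L' hL' hcard using hsub
  obtain ⟨c, hc, hw⟩ := h L' hcard
    (fun w => {Nat.pair (u w.1) w.2.1, Nat.pair (v w.1) w.2.2}) (by
      intro w
      apply Finset.card_pair
      intro hp
      exact huv w.1 (Nat.pair_eq_pair.1 hp).1)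
  have hcm : ∀ i, ∃ x ∈ L i, ∃ y : Fin k, Nat.pair x y = c i := by
    intro i
    obtain ⟨⟨x, y⟩, hp, he⟩ := Finset.mem_image.1 (hL' i (hc i))
    rw [Finset.mem_product, Finset.mem_range] at hp
    exact ⟨x, hp.1, ⟨y, hp.2⟩, he⟩
  choose d hd y hy using hcm
  refine ⟨d, hd, fun w => ?_⟩
  rw [hM']
  by_contra! hcon
  -- If both colours of `{u w, v w}` are used, their used copies form a blown-up list with no
  -- unused colour.
  obtain ⟨i, hi⟩ := hcon (u w) (by simp)
  obtain ⟨j, hj⟩ := hcon (v w) (by simp)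
  obtain ⟨x, hx, hne⟩ := hw (w, y i, y j)
  rcases Finset.mem_insert.1 hx with rfl | hx
  · exact hne i (by rw [← hy i, hi])
  · rw [Finset.mem_singleton] at hx
    exact hne j (by rw [hx, ← hy j, hj])

/-! ### Counting bound for constant list sizes -/

/-- Fixing two coordinates divides the number of choices by at least `N²`. -/
theorem card_filter_two_mul_le {a N : ℕ} (L : Fin a → Finset ℕ) (hL : ∀ i, (L i).card = N)
    {i j : Fin a} (hij : i ≠ j) (u v : ℕ) :
    ((Fintype.piFinset L).filter (fun c => c i = u ∧ c j = v)).card * N ^ 2 ≤ N ^ a := by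
  have hsub : (Fintype.piFinset L).filter (fun c => c i = u ∧ c j = v) ⊆
      Fintype.piFinset (fun k => if k = i then {u} else if k = j then {v} else L k) := by
    intro c hc
    obtain ⟨hc, h1, h2⟩ := Finset.mem_filter.1 hc
    rw [Fintype.mem_piFinset] at hc ⊢
    intro k
    split_ifs with h h'
    · subst h; simp [h1]
    · subst h'; simp [h2]
    · exact hc k
  have hprod : (∏ k : Fin a, if k = i ∨ k = j then N else 1) = N ^ 2 := by
    have hf : Finset.univ.filter (fun k : Fin a => k = i ∨ k = j) = {i, j} := by
      ext; simp
    rw [Finset.prod_ite, hf]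
    simp [Finset.card_pair hij]
  calc _ ≤ (∏ k : Fin a, if k = i ∨ k = j then 1 else N) * N ^ 2 := by
        gcongr
        refine (Finset.card_le_card hsub).trans_eq ?_
        rw [Fintype.card_piFinset]
        refine Finset.prod_congr rfl fun k _ => ?_
        by_cases h : k = i <;> by_cases h' : k = j <;> simp [h, h', hL]
        all_goals split_ifs <;> simp
    _ = N ^ a := by
        rw [← hprod, ← Finset.prod_mul_distrib]
        have : ∀ k : Fin a, (if k = i ∨ k = j then 1 else N) * (if k = i ∨ k = j then N else 1) = N := by
          intro k; split_ifs <;> simp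
        simp [this]

theorem suff_const {a q N : ℕ} (h : a ^ 2 * q < N ^ 2) : Suff (fun _ : Fin a => N) (Fin q) := by
  intro L hL M hM
  choose u v huv hM' using fun w => Finset.card_eq_two.1 (hM w)
  by_contra! hcon
  have hN : 0 < N := Nat.pos_of_ne_zero (by rintro rfl; simp at h)
  have hcover : Fintype.piFinset L ⊆ (Finset.univ : Finset (Fin q × Fin a × Fin a)).biUnion
      (fun p => (Fintype.piFinset L).filter
        (fun c => p.2.1 ≠ p.2.2 ∧ c p.2.1 = u p.1 ∧ c p.2.2 = v p.1)) := by
    intro c hc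
    obtain ⟨w, hw⟩ := hcon c (Fintype.mem_piFinset.1 hc)
    obtain ⟨i, hi⟩ := hw (u w) (by simp [hM'])
    obtain ⟨j, hj⟩ := hw (v w) (by simp [hM'])
    refine Finset.mem_biUnion.2 ⟨(w, i, j), Finset.mem_univ _, Finset.mem_filter.2 ⟨hc, ?_, hi, hj⟩⟩
    rintro hij
    exact huv w (by rw [← hi, ← hj]; exact congrArg c hij)
  have hpt : ∀ p : Fin q × Fin a × Fin a, ((Fintype.piFinset L).filter
      (fun c => p.2.1 ≠ p.2.2 ∧ c p.2.1 = u p.1 ∧ c p.2.2 = v p.1)).card * N ^ 2 ≤ N ^ a := by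
    intro p
    by_cases hp : p.2.1 = p.2.2
    · simp [hp]
    · simpa [hp] using card_filter_two_mul_le L hL hp (u p.1) (v p.1)
  have hle : N ^ a * N ^ 2 ≤ (a ^ 2 * q) * N ^ a := by
    calc N ^ a * N ^ 2 = (Fintype.piFinset L).card * N ^ 2 := by simp [Fintype.card_piFinset, hL]
      _ ≤ (∑ p : Fin q × Fin a × Fin a, ((Fintype.piFinset L).filter
            (fun c => p.2.1 ≠ p.2.2 ∧ c p.2.1 = u p.1 ∧ c p.2.2 = v p.1)).card) * N ^ 2 := by
          gcongr
          exact (Finset.card_le_card hcover).trans Finset.card_biUnion_le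
      _ ≤ ∑ p : Fin q × Fin a × Fin a, N ^ a := by
          rw [Finset.sum_mul]
          exact Finset.sum_le_sum fun p _ => hpt p
      _ = (a ^ 2 * q) * N ^ a := by
          rw [Finset.sum_const, Finset.card_univ]
          simp only [Fintype.card_prod, Fintype.card_fin, smul_eq_mul]
          ring
  have : 0 < N ^ a := by positivity
  nlinarith

theorem suff_sqrt {a : ℕ} (ha : 1 ≤ a) (q : ℕ) :
    Suff (fun _ : Fin a => a * (Nat.sqrt q + 1)) (Fin q) := by
  apply suff_const
  rw [mul_pow]
  have := Nat.lt_succ_sqrt' q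
  gcongr

/-! ### The minimum `gmin` and its asymptotics -/

theorem gmin_le {a : ℕ} (ha : 1 ≤ a) (q : ℕ) : gmin a q ≤ a ^ 2 * (Nat.sqrt q + 1) :=
  Nat.sInf_le ⟨_, suff_sqrt ha q, by simp; ring⟩

theorem exists_gmin {a : ℕ} (ha : 1 ≤ a) (q : ℕ) :
    ∃ n : Fin a → ℕ, Suff n (Fin q) ∧ ∑ i, n i = gmin a q :=
  Nat.sInf_mem (s := {s : ℕ | ∃ n : Fin a → ℕ, Suff n (Fin q) ∧ ∑ i, n i = s})
    ⟨_, _, suff_sqrt ha q, rfl⟩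

theorem sumChoice2_eq {a : ℕ} (ha : 1 ≤ a) (q : ℕ) : sumChoice2 a q = gmin a q + 2 * q := by
  obtain ⟨n, hn, hsum⟩ := exists_gmin ha q
  have hmem : gmin a q + 2 * q ∈ {n : ℕ | ∃ f : Fin a ⊕ Fin q → ℕ,
      Choosable (completeBipartiteGraph (Fin a) (Fin q)) f ∧
      (∀ v : Fin q, f (Sum.inr v) = 2) ∧ ∑ v, f v = n} :=
    ⟨Sum.elim n fun _ => 2, (choosable_iff_suff _ (by simp)).2 hn, by simp,
      by simp [hsum, mul_comm]⟩
  refine le_antisymm (Nat.sInf_le hmem) (le_csInf ⟨_, hmem⟩ ?_)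
  rintro s ⟨f, hf, hf2, rfl⟩
  have : gmin a q ≤ ∑ i, f (Sum.inl i) := Nat.sInf_le ⟨_, (choosable_iff_suff f hf2).1 hf, rfl⟩
  simp [hf2]
  lia

theorem gmin_blowup {a : ℕ} (ha : 1 ≤ a) {q k t : ℕ} (hq : 1 ≤ q) (hqk : q * k ^ 2 ≤ t) :
    (k : ℝ) * ((gmin a q : ℝ) - a) ≤ gmin a t := by
  rcases Nat.eq_zero_or_pos k with rfl | hk
  · simp
  obtain ⟨n, hn, hsum⟩ := exists_gmin ha t
  have h1 : gmin a q ≤ ∑ i, (n i / k + 1) := Nat.sInf_le ⟨_, hn.blowup hq hk hqk, rfl⟩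
  have h2 : k * gmin a q ≤ gmin a t + k * a := by
    calc k * gmin a q ≤ k * ∑ i, (n i / k + 1) := by gcongr
      _ = ∑ i, k * (n i / k) + k * a := by
          rw [Finset.sum_add_distrib, mul_add, Finset.mul_sum]; simp
      _ ≤ gmin a t + k * a := by
          rw [← hsum]
          gcongr with i
          exact Nat.mul_div_le _ _
  have h3 : (k : ℝ) * gmin a q ≤ gmin a t + k * a := by exact_mod_cast h2
  linarith

/-- A Fekete-type lemma: if `g q = O(√q)` and multiplying `q` by `k²` multiplies `g q - a` by at
least `k`, then `g q / √q` converges. The limit is the supremum of `(g q - a) / √q`. -/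
theorem tendsto_of_blowup (g : ℕ → ℝ) (a C : ℝ) (ha : 0 ≤ a)
    (hblow : ∀ q k t : ℕ, 1 ≤ q → q * k ^ 2 ≤ t → (k : ℝ) * (g q - a) ≤ g t)
    (hC : ∀ q : ℕ, 1 ≤ q → g q ≤ C * √q) :
    ∃ l : ℝ, Filter.Tendsto (fun q : ℕ => g q / √q) Filter.atTop (nhds l) := by
  have hsqrt : Filter.Tendsto (fun t : ℕ => √(t : ℝ)) Filter.atTop Filter.atTop :=
    Real.tendsto_sqrt_atTop.comp tendsto_natCast_atTop_atTop
  have hpos : ∀ q : ℕ, 1 ≤ q → 0 < √(q : ℝ) := fun q hq => Real.sqrt_pos.2 (by exact_mod_cast hq)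
  set S : Set ℝ := (fun q : ℕ => (g q - a) / √q) '' Set.Ici 1 with hS
  have hbdd : BddAbove S := by
    refine ⟨C, ?_⟩
    rintro _ ⟨q, hq, rfl⟩
    have := hC q hq
    exact (div_le_iff₀ (hpos q hq)).2 (by linarith)
  have hne : S.Nonempty := ⟨_, 1, le_refl 1, rfl⟩
  refine ⟨sSup S, tendsto_order.2 ⟨fun l hl => ?_, fun u hu => ?_⟩⟩
  · obtain ⟨_, ⟨q, hq, rfl⟩, hlq⟩ := exists_lt_of_lt_csSup hne hl
    have hq0 := hpos q hq
    -- Compare `g t` with `g q` through the largest blow-up factor `k ≤ √(t/q)`.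
    have hlim : Filter.Tendsto (fun t : ℕ => (⌊(√(q : ℝ))⁻¹ * √(t : ℝ)⌋₊ : ℝ) / √(t : ℝ) * (g q - a))
        Filter.atTop (nhds ((√(q : ℝ))⁻¹ * (g q - a))) :=
      ((tendsto_nat_floor_mul_div_atTop (inv_nonneg.2 hq0.le)).comp hsqrt).mul_const _
    have hev := hlim.eventually_const_lt (u := l) (by
      rw [← div_eq_inv_mul]; exact hlq)
    filter_upwards [hev, Filter.eventually_ge_atTop 1] with t ht ht1
    refine ht.trans_le ?_
    rw [div_mul_eq_mul_div]
    refine div_le_div_of_nonneg_right (hblow q _ t hq ?_) (hpos t ht1).le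
    have hfl : (⌊(√(q : ℝ))⁻¹ * √(t : ℝ)⌋₊ : ℝ) ≤ (√(q : ℝ))⁻¹ * √(t : ℝ) :=
      Nat.floor_le (by positivity)
    have h2 : (q : ℝ) * (⌊(√(q : ℝ))⁻¹ * √(t : ℝ)⌋₊ : ℝ) ^ 2 ≤ (t : ℝ) := by
      calc (q : ℝ) * (⌊(√(q : ℝ))⁻¹ * √(t : ℝ)⌋₊ : ℝ) ^ 2
          ≤ q * ((√(q : ℝ))⁻¹ * √(t : ℝ)) ^ 2 := by gcongr
        _ = (t : ℝ) := by
          have : (q : ℝ) ≠ 0 := by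
            have : 1 ≤ q := hq
            positivity
          rw [mul_pow, inv_pow, Real.sq_sqrt (by positivity), Real.sq_sqrt (by positivity)]
          field_simp
    exact_mod_cast h2
  · have hlim : Filter.Tendsto (fun t : ℕ => sSup S + a / √(t : ℝ)) Filter.atTop
        (nhds (sSup S + 0)) :=
      (hsqrt.const_div_atTop a).const_add _
    have hev := hlim.eventually_lt_const (u := u) (by simpa using hu)
    filter_upwards [hev, Filter.eventually_ge_atTop 1] with t ht ht1
    have : (g t - a) / √(t : ℝ) ≤ sSup S := le_csSup hbdd ⟨t, ht1, rfl⟩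
    rw [sub_div] at this
    linarith

/-- Theorem (limit exists for type II): for every fixed `a ≥ 2` the limit
`lim_{q→∞} (χ_sc2(K_{a,q}) − 2q)/√q` exists. -/
theorem sumChoice2_limit_exists (a : ℕ) (ha : 2 ≤ a) :
    ∃ l : ℝ, Filter.Tendsto
      (fun q : ℕ => ((sumChoice2 a q : ℝ) - 2 * q) / Real.sqrt q)
      Filter.atTop (nhds l) := by
  have ha1 : 1 ≤ a := by lia
  obtain ⟨l, hl⟩ := tendsto_of_blowup (fun q => (gmin a q : ℝ)) a (a ^ 2 * 2) (by positivity)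
    (fun q k t hq hqk => gmin_blowup ha1 hq hqk) (by
      intro q hq
      have h1 : (gmin a q : ℝ) ≤ a ^ 2 * (Nat.sqrt q + 1) := by exact_mod_cast gmin_le ha1 q
      have h2 : (Nat.sqrt q : ℝ) ≤ √q := Real.nat_sqrt_le_real_sqrt
      have h3 : (1 : ℝ) ≤ √q := Real.one_le_sqrt.2 (by exact_mod_cast hq)
      refine h1.trans ?_
      rw [mul_assoc]
      gcongr
      linarith)
  refine ⟨l, hl.congr fun q => ?_⟩
  rw [sumChoice2_eq ha1 q]
  push_cast
  ring_nf
end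

section
/- Fix integers a ≥ 2 and q ≥ 1 and list sizes f₁, …, f_a for the vertices of A. There exists an insufficient type II assignment of K_{a,q} with these list sizes if and only if there exists a symmetric insufficient type II assignment with these list sizes. -/
/-!
Symmetrization by a random choice of representatives. Keep the lists `LA i` of an insufficient
assignment with color graph `G`, pick a representative `r I` in every nonempty class `X_I`, and
let `G_r` join colors `x`, `y` of different classes exactly when `r` of the class of `x` is
`G`-adjacent to `r` of the class of `y`. This graph is symmetric by construction.

`G_r` is still insufficient: replacing each color of a transversal by the representative of its
class gives another transversal, which must contain an edge of `G`, and this edge pulls back to an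
edge of `G_r` in the original transversal (`exists_pair_mem_blowup`).

For some `r` the graph `G_r` has at most as many edges as `G`: for independent uniform `r I`, the
expected number of edges of `G_r` between `X_I` and `X_J` is the number of edges of `G` between
them. The averaging is carried out by the involution that exchanges a pair `(x, y)` from two
different classes with the two representatives of these classes (`sum_card_blowup`).

Edges are counted as ordered pairs `(x, y)` where the class of `x` precedes that of `y` under an
injection `φ` of the classes into `ℕ`; this order is preserved by the involution. The at most `q`
edges of `G_r` are finally listed, with repetitions, as the `q` lists on the part `Q`.
-/

open SimpleGraph Finset

/-- A type II assignment of `K_{a,q}` (lists `LA i` on the part `A`, 2-element lists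
`LQ v` on the part `Q`) is *insufficient* if no proper coloring chooses colors from the
lists; equivalently no transversal of the hypergraph `{LA i}` is independent in the
(multi)graph whose edges are the lists `LQ v`. -/
def InsufficientII {a q : ℕ} (LA : Fin a → Finset ℕ) (LQ : Fin q → Finset ℕ) : Prop :=
  ¬∃ c : Fin a ⊕ Fin q → ℕ,
      (∀ u : Fin a, c (Sum.inl u) ∈ LA u) ∧ (∀ v : Fin q, c (Sum.inr v) ∈ LQ v) ∧
      ∀ x y, (completeBipartiteGraph (Fin a) (Fin q)).Adj x y → c x ≠ c y

/-- `Xclass LA I` is the set of colors belonging to `LA i` for exactly the indices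
`i ∈ I`. -/
def Xclass {a : ℕ} (LA : Fin a → Finset ℕ) (I : Finset (Fin a)) : Set ℕ :=
  {x | ∀ i : Fin a, x ∈ LA i ↔ i ∈ I}

/-- A type II assignment is *symmetric* if each class `X_I` spans no edge of the graph
given by the 2-element lists of `Q`, and between any two distinct classes the bipartite
graph induced by those lists is either complete or empty. -/
def SymmetricII {a q : ℕ} (LA : Fin a → Finset ℕ) (LQ : Fin q → Finset ℕ) : Prop :=
  (∀ I : Finset (Fin a), ∀ x ∈ Xclass LA I, ∀ y ∈ Xclass LA I,
      ¬∃ v : Fin q, LQ v = {x, y}) ∧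
  (∀ I J : Finset (Fin a), I ≠ J →
      (∀ x ∈ Xclass LA I, ∀ y ∈ Xclass LA J, ∃ v : Fin q, LQ v = {x, y}) ∨
      (∀ x ∈ Xclass LA I, ∀ y ∈ Xclass LA J, ¬∃ v : Fin q, LQ v = {x, y}))

/-! ### Classes, representatives and the graph `G_r` -/

/-- The colors `x` and `y` are joined by one of the lists of `Q`. -/
def ListAdj {q : ℕ} (LQ : Fin q → Finset ℕ) (x y : ℕ) : Prop := ∃ v, LQ v = {x, y}

/-- The set of indices `i` with `x ∈ LA i`, i.e. the index `I` of the class `X_I` of `x`. -/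
def clsIdx {a : ℕ} (LA : Fin a → Finset ℕ) (x : ℕ) : Finset (Fin a) := {i | x ∈ LA i}

/-- The colors occurring in some list of the part `A`. -/
def usedColors {a : ℕ} (LA : Fin a → Finset ℕ) : Finset ℕ := univ.biUnion LA

/-- The used colors of class `I`, with the dummy value `{0}` for an empty class, so that a choice
of one element from each of these sets always exists. -/
def repSet {a : ℕ} (LA : Fin a → Finset ℕ) (I : Finset (Fin a)) : Finset ℕ :=
  if ((usedColors LA).filter (clsIdx LA · = I)).Nonempty then
    (usedColors LA).filter (clsIdx LA · = I) else {0}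

/-- Pairs of used colors from different classes, ordered by the `φ`-value of the class. -/
def crossPairs {a : ℕ} (LA : Fin a → Finset ℕ) (φ : Finset (Fin a) → ℕ) : Finset (ℕ × ℕ) :=
  (usedColors LA ×ˢ usedColors LA).filter fun p => φ (clsIdx LA p.1) < φ (clsIdx LA p.2)

open Classical in
/-- The edges of `G_r`: two colors of different classes are joined when the representatives of
their classes are joined by a list of `Q`. -/
noncomputable def blowup {a q : ℕ} (LA : Fin a → Finset ℕ) (LQ : Fin q → Finset ℕ)
    (φ : Finset (Fin a) → ℕ) (r : Finset (Fin a) → ℕ) : Finset (ℕ × ℕ) :=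
  (crossPairs LA φ).filter fun p => ListAdj LQ (r (clsIdx LA p.1)) (r (clsIdx LA p.2))

open Classical in
/-- The edges of `G` between used colors of different classes. -/
noncomputable def crossEdges {a q : ℕ} (LA : Fin a → Finset ℕ) (LQ : Fin q → Finset ℕ)
    (φ : Finset (Fin a) → ℕ) : Finset (ℕ × ℕ) :=
  (crossPairs LA φ).filter fun p => ListAdj LQ p.1 p.2

section

variable {a q : ℕ} {LA : Fin a → Finset ℕ} {LQ : Fin q → Finset ℕ}
  {φ : Finset (Fin a) → ℕ} {r : Finset (Fin a) → ℕ}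

lemma ListAdj.symm {x y : ℕ} (h : ListAdj LQ x y) : ListAdj LQ y x := by
  obtain ⟨v, hv⟩ := h
  exact ⟨v, by rw [hv, pair_comm]⟩

lemma mem_clsIdx {x : ℕ} {i : Fin a} : i ∈ clsIdx LA x ↔ x ∈ LA i := by simp [clsIdx]

lemma mem_usedColors {x : ℕ} : x ∈ usedColors LA ↔ (clsIdx LA x).Nonempty := by
  simp [usedColors, Finset.Nonempty, mem_clsIdx]

lemma mem_Xclass {x : ℕ} {I : Finset (Fin a)} : x ∈ Xclass LA I ↔ clsIdx LA x = I := by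
  simp [Xclass, Finset.ext_iff, mem_clsIdx]

lemma mem_repSet {x : ℕ} (hx : x ∈ usedColors LA) {z : ℕ} :
    z ∈ repSet LA (clsIdx LA x) ↔ z ∈ usedColors LA ∧ clsIdx LA z = clsIdx LA x := by
  rw [repSet, if_pos ⟨x, by simp [hx]⟩, mem_filter]

lemma mem_crossPairs {p : ℕ × ℕ} : p ∈ crossPairs LA φ ↔
    p.1 ∈ usedColors LA ∧ p.2 ∈ usedColors LA ∧ φ (clsIdx LA p.1) < φ (clsIdx LA p.2) := by
  simp [crossPairs, and_assoc]

lemma mem_blowup {p : ℕ × ℕ} : p ∈ blowup LA LQ φ r ↔ p ∈ crossPairs LA φ ∧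
    ListAdj LQ (r (clsIdx LA p.1)) (r (clsIdx LA p.2)) := by
  simp [blowup]

lemma mem_crossEdges {p : ℕ × ℕ} : p ∈ crossEdges LA LQ φ ↔ p ∈ crossPairs LA φ ∧
    ListAdj LQ p.1 p.2 := by
  simp [crossEdges]

/-- All systems of representatives. -/
def reps (LA : Fin a → Finset ℕ) : Finset (Finset (Fin a) → ℕ) := Fintype.piFinset (repSet LA)

lemma reps_nonempty (LA : Fin a → Finset ℕ) : (reps LA).Nonempty := by
  rw [reps, Fintype.piFinset_nonempty]
  intro I
  unfold repSet
  split_ifs with h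
  · exact h
  · simp

lemma rep_spec (hr : r ∈ reps LA) {x : ℕ} (hx : x ∈ usedColors LA) :
    r (clsIdx LA x) ∈ usedColors LA ∧ clsIdx LA (r (clsIdx LA x)) = clsIdx LA x :=
  (mem_repSet hx).1 (Fintype.mem_piFinset.1 hr _)

/-! ### Averaging over systems of representatives -/

/-- The involution behind the averaging: a pair of colors is exchanged with the representatives
of its two classes. -/
def swapRep (LA : Fin a → Finset ℕ) (t : (_ : Finset (Fin a) → ℕ) × (ℕ × ℕ)) :
    (_ : Finset (Fin a) → ℕ) × (ℕ × ℕ) :=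
  ⟨Function.update (Function.update t.1 (clsIdx LA t.2.1) t.2.1) (clsIdx LA t.2.2) t.2.2,
    (t.1 (clsIdx LA t.2.1), t.1 (clsIdx LA t.2.2))⟩

lemma swapRep_mem {p : ℕ × ℕ} (hr : r ∈ reps LA) (hp : p ∈ crossPairs LA φ) :
    (swapRep LA ⟨r, p⟩).1 ∈ reps LA ∧ (swapRep LA ⟨r, p⟩).2 ∈ crossPairs LA φ := by
  obtain ⟨h1, h2, h3⟩ := mem_crossPairs.1 hp
  obtain ⟨h4, h5⟩ := rep_spec hr h1
  obtain ⟨h6, h7⟩ := rep_spec hr h2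
  refine ⟨Fintype.mem_piFinset.2 fun I => ?_, mem_crossPairs.2 ⟨h4, h6, ?_⟩⟩
  · by_cases hI2 : I = clsIdx LA p.2
    · subst hI2
      simpa [swapRep] using (mem_repSet h2).2 ⟨h2, rfl⟩
    by_cases hI1 : I = clsIdx LA p.1
    · subst hI1
      simpa [swapRep, hI2] using (mem_repSet h1).2 ⟨h1, rfl⟩
    · simpa [swapRep, hI1, hI2] using Fintype.mem_piFinset.1 hr I
  · simpa [swapRep, h5, h7] using h3

lemma swapRep_rep {p : ℕ × ℕ} (hr : r ∈ reps LA) (hp : p ∈ crossPairs LA φ) :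
    (swapRep LA ⟨r, p⟩).1 (clsIdx LA (swapRep LA ⟨r, p⟩).2.1) = p.1 ∧
    (swapRep LA ⟨r, p⟩).1 (clsIdx LA (swapRep LA ⟨r, p⟩).2.2) = p.2 := by
  obtain ⟨h1, h2, h3⟩ := mem_crossPairs.1 hp
  have hne : clsIdx LA p.1 ≠ clsIdx LA p.2 := fun h => by simp [h] at h3
  simp [swapRep, (rep_spec hr h1).2, (rep_spec hr h2).2, hne]

lemma swapRep_swapRep {p : ℕ × ℕ} (hr : r ∈ reps LA) (hp : p ∈ crossPairs LA φ) :
    swapRep LA (swapRep LA ⟨r, p⟩) = ⟨r, p⟩ := by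
  obtain ⟨h1, h2, h3⟩ := mem_crossPairs.1 hp
  have hne : clsIdx LA p.1 ≠ clsIdx LA p.2 := fun h => by simp [h] at h3
  have key : (swapRep LA (swapRep LA ⟨r, p⟩)).2 = p :=
    Prod.ext (swapRep_rep hr hp).1 (swapRep_rep hr hp).2
  refine Sigma.ext ?_ (heq_of_eq key)
  funext I
  by_cases hI2 : I = clsIdx LA p.2
  · subst hI2
    simp [swapRep, (rep_spec hr h1).2, (rep_spec hr h2).2]
  by_cases hI1 : I = clsIdx LA p.1
  · subst hI1
    simp [swapRep, (rep_spec hr h1).2, (rep_spec hr h2).2, hne]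
  · simp [swapRep, (rep_spec hr h1).2, (rep_spec hr h2).2, hI1, hI2]

/-- On average over the systems of representatives, `G_r` has exactly as many edges as `G` has
between different classes. -/
lemma sum_card_blowup :
    ∑ r ∈ reps LA, (blowup LA LQ φ r).card = ∑ _r ∈ reps LA, (crossEdges LA LQ φ).card := by
  rw [← card_sigma, ← card_sigma]
  refine card_nbij' (swapRep LA) (swapRep LA) ?_ ?_ ?_ ?_
  · rintro ⟨r, p⟩ h
    obtain ⟨hr, hp⟩ := mem_sigma.1 h
    obtain ⟨hp, hadj⟩ := mem_blowup.1 hp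
    have := swapRep_mem hr hp
    exact mem_sigma.2 ⟨this.1, mem_crossEdges.2 ⟨this.2, hadj⟩⟩
  · rintro ⟨r, p⟩ h
    obtain ⟨hr, hp⟩ := mem_sigma.1 h
    obtain ⟨hp, hadj⟩ := mem_crossEdges.1 hp
    have := swapRep_mem hr hp
    refine mem_sigma.2 ⟨this.1, mem_blowup.2 ⟨this.2, ?_⟩⟩
    rwa [(swapRep_rep hr hp).1, (swapRep_rep hr hp).2]
  · rintro ⟨r, p⟩ h
    obtain ⟨hr, hp⟩ := mem_sigma.1 h
    exact swapRep_swapRep hr (mem_blowup.1 hp).1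
  · rintro ⟨r, p⟩ h
    obtain ⟨hr, hp⟩ := mem_sigma.1 h
    exact swapRep_swapRep hr (mem_crossEdges.1 hp).1

/-- The ordering by `φ` makes a pair recoverable from its two-element set, so distinct pairs come
from distinct vertices of `Q`. -/
lemma card_crossEdges_le : (crossEdges LA LQ φ).card ≤ q := by
  have h : ∀ p : crossEdges LA LQ φ, ∃ v, LQ v = {p.1.1, p.1.2} :=
    fun p => (mem_crossEdges.1 p.2).2
  choose g hg using h
  have hinj : Function.Injective g := by
    rintro ⟨⟨x, y⟩, hp⟩ ⟨⟨x', y'⟩, hp'⟩ h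
    have h1 := (mem_crossPairs.1 (mem_crossEdges.1 hp).1).2.2
    have h2 := (mem_crossPairs.1 (mem_crossEdges.1 hp').1).2.2
    have he : ({x, y} : Finset ℕ) = {x', y'} := by
      rw [← hg ⟨(x, y), hp⟩, ← hg ⟨(x', y'), hp'⟩, h]
    have he' : ({x, y} : Set ℕ) = {x', y'} := by
      simpa using congrArg (fun s : Finset ℕ => (s : Set ℕ)) he
    rcases Set.pair_eq_pair_iff.1 he' with ⟨rfl, rfl⟩ | ⟨rfl, rfl⟩
    · rfl
    · exact absurd h1 (lt_asymm h2)
  simpa using Fintype.card_le_of_injective g hinj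

lemma exists_card_blowup_le : ∃ r ∈ reps LA, (blowup LA LQ φ r).card ≤ q := by
  obtain ⟨r, hr, h⟩ := exists_le_of_sum_le (reps_nonempty LA)
    (sum_card_blowup (LA := LA) (LQ := LQ) (φ := φ)).le
  exact ⟨r, hr, h.trans card_crossEdges_le⟩

/-! ### Insufficiency and symmetry of `G_r` -/

/-- In an insufficient assignment every transversal contains both ends of an edge: otherwise each
vertex of `Q` has a color left. -/
lemma InsufficientII.exists_subset (h : InsufficientII LA LQ) (c : Fin a → ℕ)
    (hc : ∀ u, c u ∈ LA u) : ∃ v, LQ v ⊆ univ.image c := by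
  by_contra! hcon
  have : ∀ v, ∃ z ∈ LQ v, z ∉ univ.image c := fun v => not_subset.1 (hcon v)
  choose d hd hd' using this
  have hne : ∀ u v, c u ≠ d v := fun u v e => hd' v (by simp [← e])
  refine h ⟨Sum.elim c d, hc, hd, ?_⟩
  rintro (u | u) (v | v) hadj
  · simp at hadj
  · exact hne u v
  · exact (hne v u).symm
  · simp at hadj

/-- Every transversal of the lists on `A` contains an edge of `G_r`. -/
lemma exists_pair_mem_blowup (hφ : Function.Injective φ) (h : InsufficientII LA LQ)
    (h2 : ∀ v, (LQ v).card = 2) (hr : r ∈ reps LA) (c : Fin a → ℕ) (hc : ∀ u, c u ∈ LA u) :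
    ∃ i j, (c i, c j) ∈ blowup LA LQ φ r := by
  have hV : ∀ u, c u ∈ usedColors LA := fun u => mem_usedColors.2 ⟨u, mem_clsIdx.2 (hc u)⟩
  obtain ⟨v, hv⟩ := h.exists_subset (fun u => r (clsIdx LA (c u))) fun u => by
    rw [← mem_clsIdx, (rep_spec hr (hV u)).2, mem_clsIdx]
    exact hc u
  obtain ⟨x, y, hxy, hLQ⟩ := card_eq_two.1 (h2 v)
  rw [hLQ, insert_subset_iff, singleton_subset_iff] at hv
  simp only [mem_image, mem_univ, true_and] at hv
  obtain ⟨⟨i, rfl⟩, ⟨j, rfl⟩⟩ := hv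
  have hne : φ (clsIdx LA (c i)) ≠ φ (clsIdx LA (c j)) := fun e => hxy (by rw [hφ e])
  have hadj : ListAdj LQ (r (clsIdx LA (c i))) (r (clsIdx LA (c j))) := ⟨v, hLQ⟩
  rcases hne.lt_or_gt with hlt | hlt
  · exact ⟨i, j, mem_blowup.2 ⟨mem_crossPairs.2 ⟨hV i, hV j, hlt⟩, hadj⟩⟩
  · exact ⟨j, i, mem_blowup.2 ⟨mem_crossPairs.2 ⟨hV j, hV i, hlt⟩, hadj.symm⟩⟩

/-- Lists on `Q` whose edges are precisely those of `G_r` form a symmetric assignment. -/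
lemma symmetric_of_blowup (hφ : Function.Injective φ) {LQ' : Fin q → Finset ℕ}
    (hLQ' : ∀ x y, ListAdj LQ' x y ↔ (x, y) ∈ blowup LA LQ φ r ∨ (y, x) ∈ blowup LA LQ φ r) :
    SymmetricII LA LQ' := by
  have hadj : ∀ x y, ListAdj LQ' x y ↔ x ∈ usedColors LA ∧ y ∈ usedColors LA ∧
      clsIdx LA x ≠ clsIdx LA y ∧ ListAdj LQ (r (clsIdx LA x)) (r (clsIdx LA y)) := by
    intro x y
    rw [hLQ']
    simp only [mem_blowup, mem_crossPairs]
    constructor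
    · rintro (⟨⟨h1, h2, h3⟩, h4⟩ | ⟨⟨h1, h2, h3⟩, h4⟩)
      · exact ⟨h1, h2, fun e => by simp [e] at h3, h4⟩
      · exact ⟨h2, h1, fun e => by simp [e] at h3, h4.symm⟩
    · rintro ⟨h1, h2, h3, h4⟩
      rcases (hφ.ne h3).lt_or_gt with hlt | hlt
      · exact Or.inl ⟨⟨h1, h2, hlt⟩, h4⟩
      · exact Or.inr ⟨⟨h2, h1, hlt⟩, h4.symm⟩
  refine ⟨fun I x hx y hy hxy => ?_, fun I J hIJ => ?_⟩
  · exact ((hadj x y).1 hxy).2.2.1 ((mem_Xclass.1 hx).trans (mem_Xclass.1 hy).symm)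
  -- Nonemptiness of `I` and `J` is tested because the class `X_∅` of unused colors is infinite
  -- and must carry no edges.
  · by_cases h : I.Nonempty ∧ J.Nonempty ∧ ListAdj LQ (r I) (r J)
    · left
      intro x hx y hy
      rw [mem_Xclass] at hx hy
      subst hx hy
      exact (hadj x y).2 ⟨mem_usedColors.2 h.1, mem_usedColors.2 h.2.1, hIJ, h.2.2⟩
    · right
      intro x hx y hy hxy
      rw [mem_Xclass] at hx hy
      subst hx hy
      obtain ⟨h1, h2, -, h4⟩ := (hadj x y).1 hxy
      exact h ⟨mem_usedColors.1 h1, mem_usedColors.1 h2, h4⟩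

end

/-- Lemma: given `a ≥ 2`, `q ≥ 1` and (positive) list sizes `f i` for the part `A`, an
insufficient type II assignment with these list sizes exists if and only if a symmetric
insufficient type II assignment with these list sizes exists. -/
theorem insufficient_iff_symmetric_insufficient (a q : ℕ) (ha : 2 ≤ a) (hq : 1 ≤ q)
    (f : Fin a → ℕ) (hf : ∀ i, 1 ≤ f i) :
    (∃ (LA : Fin a → Finset ℕ) (LQ : Fin q → Finset ℕ),
        (∀ i, (LA i).card = f i) ∧ (∀ v, (LQ v).card = 2) ∧ InsufficientII LA LQ) ↔
    (∃ (LA : Fin a → Finset ℕ) (LQ : Fin q → Finset ℕ),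
        (∀ i, (LA i).card = f i) ∧ (∀ v, (LQ v).card = 2) ∧ InsufficientII LA LQ ∧
        SymmetricII LA LQ) := by
  constructor
  swap
  · rintro ⟨LA, LQ, h1, h2, h3, -⟩
    exact ⟨LA, LQ, h1, h2, h3⟩
  rintro ⟨LA, LQ, hLA, hLQ, hins⟩
  obtain ⟨φ, hφ⟩ := exists_injective_nat (Finset (Fin a))
  obtain ⟨r, hr, hcard⟩ := exists_card_blowup_le (LA := LA) (LQ := LQ) (φ := φ)
  have hmeet := exists_pair_mem_blowup hφ hins hLQ hr
  have hne : ∀ u, ∃ x, x ∈ LA u := fun u => by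
    have : 0 < (LA u).card := by rw [hLA]; exact hf u
    exact card_pos.1 this
  choose c₀ hc₀ using hne
  obtain ⟨i₀, j₀, he₀⟩ := hmeet c₀ hc₀
  have : Nonempty (blowup LA LQ φ r) := ⟨⟨_, he₀⟩⟩
  obtain ⟨ι⟩ := Function.Embedding.nonempty_of_card_le
    (α := blowup LA LQ φ r) (β := Fin q) (by simpa using hcard)
  -- A surjection from the vertices of `Q` onto the edges of `G_r`.
  have hsurj := Function.invFun_surjective ι.injective
  set g := Function.invFun ι
  have hcov : ∀ p ∈ blowup LA LQ φ r, ∃ v, ((g v : ℕ × ℕ)) = p := fun p hp => by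
    obtain ⟨v, hv⟩ := hsurj ⟨p, hp⟩
    exact ⟨v, by rw [hv]⟩
  refine ⟨LA, fun v => {(g v : ℕ × ℕ).1, (g v : ℕ × ℕ).2}, hLA, fun v => ?_, ?_,
    symmetric_of_blowup (LQ := LQ) (r := r) hφ fun x y => ?_⟩
  · refine card_pair fun e => ?_
    have := (mem_crossPairs.1 (mem_blowup.1 (g v).2).1).2.2
    simp [e] at this
  · rintro ⟨c, hc1, hc2, hc3⟩
    obtain ⟨i, j, hij⟩ := hmeet (fun u => c (Sum.inl u)) hc1
    obtain ⟨v, hv⟩ := hcov _ hij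
    have h := hc2 v
    beta_reduce at h
    rw [hv, mem_insert, mem_singleton] at h
    rcases h with h | h
    · exact hc3 (Sum.inl i) (Sum.inr v) (by simp) h.symm
    · exact hc3 (Sum.inl j) (Sum.inr v) (by simp) h.symm
  · constructor
    · rintro ⟨v, hv⟩
      have he : ({(g v : ℕ × ℕ).1, (g v : ℕ × ℕ).2} : Set ℕ) = {x, y} := by
        simpa using congrArg (fun s : Finset ℕ => (s : Set ℕ)) hv
      rcases Set.pair_eq_pair_iff.1 he with ⟨h1, h2⟩ | ⟨h1, h2⟩
      · exact Or.inl (by rw [← h1, ← h2]; exact (g v).2)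
      · exact Or.inr (by rw [← h1, ← h2]; exact (g v).2)
    · rintro (h | h)
      · obtain ⟨v, hv⟩ := hcov _ h
        exact ⟨v, by simp [hv]⟩
      · obtain ⟨v, hv⟩ := hcov _ h
        exact ⟨v, by simp [hv, pair_comm]⟩
end

section
/- Let s, a ≥ 2 be integers and let G be a finite graph with |E(G)| < t(s, a−1), where t(s,k) denotes the minimum of ∑_{i=1}^{k} C(d_i, 2) over all nonnegative integer sequences (d_1, …, d_k) with ∑_{i=1}^{k} d_i = s. Let L_1, …, L_a ⊆ V(G) be sets each of size s. Then there exist a distinct vertices u_1, …, u_a with u_i ∈ L_i for each i, such that {u_1, …, u_a} is an independent set in G. -/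
/-!
The greedy proof of Turán's theorem carries over to several lists. Let `W` be the union of the
lists still to be served and `v ∈ W` a vertex of least degree `d` in `G[W]`. Use `v` as the
representative of a list containing it, and delete its closed neighbourhood `N` in `W` from all
the other lists. Each of them loses at most `d + 1` vertices, while the degree sum over `W` drops
by at least `(d + 1) d = 2 C(d + 1, 2)`, since every vertex of `N` has degree at least `d`.
Prepending `d + 1` to a sequence that sums to `s - (d + 1)` gives one that sums to `s`, so the
edge bound is inherited, with one list and one term fewer (`exists_independent_sdr`).
-/

open SimpleGraph Finset

/-- `turanMin s k` is `t(s,k)`, the minimum of `∑_{i=1}^{k} C(dᵢ, 2)` over all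
nonnegative integer sequences `(d₁, …, d_k)` with `∑ dᵢ = s`. -/
noncomputable def turanMin (s k : ℕ) : ℕ :=
  sInf {m : ℕ | ∃ d : Fin k → ℕ, (∑ i, d i) = s ∧ (∑ i, Nat.choose (d i) 2) = m}

/-- Twice the number of edges of `G` inside `W`, as the sum of the degrees in `G[W]`. -/
def degSum {V : Type*} (G : SimpleGraph V) [DecidableRel G.Adj] (W : Finset V) : ℕ :=
  ∑ x ∈ W, (W.filter (G.Adj x)).card

lemma degSum_mono {V : Type*} (G : SimpleGraph V) [DecidableRel G.Adj] {W W' : Finset V}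
    (h : W ⊆ W') : degSum G W ≤ degSum G W' :=
  (Finset.sum_le_sum fun _ _ => Finset.card_le_card (Finset.filter_subset_filter _ h)).trans
    (Finset.sum_le_sum_of_subset h)

/-- Deleting vertices that all have degree at least `d` in `G[W]` lowers the degree sum by at
least `d` for each of them. -/
lemma degSum_sdiff_add_le {V : Type*} [DecidableEq V] (G : SimpleGraph V) [DecidableRel G.Adj]
    {W N : Finset V} (hN : N ⊆ W) (d : ℕ) (hd : ∀ x ∈ N, d ≤ (W.filter (G.Adj x)).card) :
    degSum G (W \ N) + N.card * d ≤ degSum G W := by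
  unfold degSum
  rw [← Finset.sum_sdiff hN]
  refine Nat.add_le_add ?_ ?_
  · exact Finset.sum_le_sum fun _ _ =>
      Finset.card_le_card (Finset.filter_subset_filter _ Finset.sdiff_subset)
  · simpa using Finset.card_nsmul_le_sum N _ d hd

/-- The inductive form of the theorem: lists are indexed by a finset, may have more than `s`
elements, and only edges inside their union count. The bound is required for every sequence,
so it is vacuous when `k = 0 < s`, which makes the case of a single list the base case. -/
lemma exists_independent_sdr {V ι : Type*} [DecidableEq V] [DecidableEq ι]
    (G : SimpleGraph V) [DecidableRel G.Adj] (k : ℕ) :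
    ∀ (s : ℕ) (I : Finset ι) (L : ι → Finset V), I.card = k + 1 → (∀ i ∈ I, s ≤ (L i).card) →
      (∀ d : Fin k → ℕ, ∑ i, d i = s →
        degSum G (I.biUnion L) < 2 * ∑ i, Nat.choose (d i) 2) →
      ∃ u : ι → V, (∀ i ∈ I, u i ∈ L i) ∧
        ∀ i ∈ I, ∀ j ∈ I, i ≠ j → u i ≠ u j ∧ ¬ G.Adj (u i) (u j) := by
  induction k with
  | zero =>
    intro s I L hI hL hE
    obtain ⟨i, rfl⟩ := Finset.card_eq_one.mp hI
    have hs : 0 < s := by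
      by_contra h
      have := hE (fun _ => 0) (by simp; omega)
      simp at this
    have hi := hL i (by simp)
    obtain ⟨v, hv⟩ := Finset.card_pos.mp (hs.trans_le hi)
    exact ⟨fun _ => v, by simpa using hv, by simp +contextual⟩
  | succ k ih =>
    intro s I L hI hL hE
    -- The one-part sequence bounds the number of edges by `C(s, 2)`.
    have hE1 := hE (Fin.cons s fun _ => 0) (by simp [Fin.sum_univ_succ])
    simp only [Fin.sum_univ_succ, Fin.cons_zero, Fin.cons_succ] at hE1
    simp only [Nat.choose_zero_succ, Finset.sum_const_zero, add_zero] at hE1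
    have hs : 0 < s := by
      by_contra h
      obtain rfl : s = 0 := by omega
      simp at hE1
    have hIne : I.Nonempty := Finset.card_pos.mp (by omega)
    have hWne : (I.biUnion L).Nonempty := by
      obtain ⟨i, hi⟩ := hIne
      obtain ⟨v, hv⟩ := Finset.card_pos.mp (hs.trans_le (hL i hi))
      exact ⟨v, Finset.mem_biUnion.mpr ⟨i, hi, hv⟩⟩
    set W := I.biUnion L with hW
    obtain ⟨v, hvW, hmin⟩ :=
      Finset.exists_min_image W (fun x => (W.filter (G.Adj x)).card) hWne
    set d := (W.filter (G.Adj v)).card with hd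
    set N := insert v (W.filter (G.Adj v)) with hN
    have hNcard : N.card = d + 1 := Finset.card_insert_of_notMem (by simp)
    have hNW : N ⊆ W := Finset.insert_subset hvW (Finset.filter_subset _ _)
    have hdrop := degSum_sdiff_add_le G hNW d fun x hx => hmin x (hNW hx)
    have hch : 2 * Nat.choose (d + 1) 2 = N.card * d := by
      rw [hNcard, Nat.choose_two_right, Nat.mul_div_cancel' (Nat.even_mul_pred_self _).two_dvd]
      simp
    have hds : d + 1 ≤ s := by
      by_contra h
      have := Nat.choose_le_choose 2 (show s ≤ d + 1 by omega)
      omega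
    obtain ⟨i₀, hi₀, hvi₀⟩ := Finset.mem_biUnion.mp hvW
    have hsub : (I.erase i₀).biUnion (fun i => L i \ N) ⊆ W \ N := by
      intro x hx
      obtain ⟨i, hi, hx⟩ := Finset.mem_biUnion.mp hx
      rw [Finset.mem_sdiff] at hx ⊢
      exact ⟨Finset.mem_biUnion.mpr ⟨i, Finset.mem_of_mem_erase hi, hx.1⟩, hx.2⟩
    obtain ⟨u, huL, hu⟩ := ih (s - (d + 1)) (I.erase i₀) (fun i => L i \ N)
      (by rw [Finset.card_erase_of_mem hi₀]; omega)
      (fun i hi => by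
        have h1 := hL i (Finset.mem_of_mem_erase hi)
        have h2 := Finset.le_card_sdiff N (L i)
        omega)
      (fun e he => by
        have h1 := hE (Fin.cons (d + 1) e) (by simp [Fin.sum_univ_succ, he]; omega)
        simp only [Fin.sum_univ_succ, Fin.cons_zero, Fin.cons_succ] at h1
        have h2 := degSum_mono G hsub
        omega)
    have hfar : ∀ i ∈ I, i ≠ i₀ → u i ≠ v ∧ ¬ G.Adj v (u i) := by
      intro i hi hne
      have hmem := Finset.mem_sdiff.mp (huL i (Finset.mem_erase.mpr ⟨hne, hi⟩))
      have hiW : u i ∈ W := Finset.mem_biUnion.mpr ⟨i, hi, hmem.1⟩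
      have hnot := hmem.2
      rw [hN, Finset.mem_insert, Finset.mem_filter] at hnot
      tauto
    refine ⟨Function.update u i₀ v, fun i hi => ?_, fun i hi j hj hij => ?_⟩
    · by_cases h : i = i₀
      · subst h; simpa using hvi₀
      · rw [Function.update_of_ne h]
        exact (Finset.mem_sdiff.mp (huL i (Finset.mem_erase.mpr ⟨h, hi⟩))).1
    · by_cases h : i = i₀
      · subst h
        rw [Function.update_self, Function.update_of_ne hij.symm]
        exact ⟨(hfar j hj hij.symm).1.symm, (hfar j hj hij.symm).2⟩
      · rw [Function.update_of_ne h]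
        by_cases h' : j = i₀
        · subst h'
          rw [Function.update_self, G.adj_comm]
          exact hfar i hi h
        · rw [Function.update_of_ne h']
          exact hu i (Finset.mem_erase.mpr ⟨h, hi⟩) j (Finset.mem_erase.mpr ⟨h', hj⟩) hij

/-- Theorem 8 (generalization of Turán's theorem): if `G` has fewer than `t(s, a−1)`
edges and `L₁, …, L_a` are `s`-element sets of vertices, then there is a system of
distinct representatives `uᵢ ∈ Lᵢ` forming an independent set in `G`. -/
theorem turan_generalization {V : Type*} [Fintype V] [DecidableEq V]
    (G : SimpleGraph V) [DecidableRel G.Adj] (s a : ℕ) (hs : 2 ≤ s) (ha : 2 ≤ a)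
    (hE : G.edgeFinset.card < turanMin s (a - 1))
    (L : Fin a → Finset V) (hL : ∀ i, (L i).card = s) :
    ∃ u : Fin a → V, Function.Injective u ∧ (∀ i, u i ∈ L i) ∧
      ∀ i j, ¬G.Adj (u i) (u j) := by
  have hdeg : degSum G Finset.univ = 2 * G.edgeFinset.card := by
    rw [← G.sum_degrees_eq_twice_card_edges]
    simp only [degSum, ← G.neighborFinset_eq_filter, G.card_neighborFinset_eq_degree]
  obtain ⟨u, huL, hu⟩ := exists_independent_sdr G (a - 1) s Finset.univ L
    (by simp; omega) (fun i _ => (hL i).ge) (fun d hd => by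
      have h1 : turanMin s (a - 1) ≤ ∑ i, Nat.choose (d i) 2 := Nat.sInf_le ⟨d, hd, rfl⟩
      have h2 := degSum_mono G (Finset.subset_univ (Finset.univ.biUnion L))
      omega)
  refine ⟨u, fun i j hij => ?_, fun i => huL i (Finset.mem_univ i), fun i j => ?_⟩
  · by_contra hne
    exact (hu i (Finset.mem_univ i) j (Finset.mem_univ j) hne).1 hij
  · by_cases hij : i = j
    · subst hij; exact G.loopless.irrefl _
    · exact (hu i (Finset.mem_univ i) j (Finset.mem_univ j) hij).2
end

section
/- For every ε > 0 there exists A₀ such that for all integers a ≥ A₀ and all integers q ≥ a³, | χ_sc(K_{a,q})/(a+q) − 2 | < ε. In particular, χ_sc(K_{a,q})/(a+q) tends to 2 while the minimum degree of K_{a,q} (namely a) tends to infinity. -/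
/-!
The value `χ_sc(K_{a,q})` lies between `2q + a` and `2q + a·m` with `m` of order `√q · log a`,
and for `q ≥ a³` both bounds are `(2 + o(1))(a + q)`.

*Lower bound.* Suppose `f` is sufficient and `s` vertices of `Q` have list size `1`. Giving these
vertices distinct colors and giving a vertex `v` of `A` only such colors shows that `f v > s`.
Hence the `a ≥ 1` vertices of `A` recover the `s` units lost on `Q`
(`two_mul_add_le_of_choosable`).

*Upper bound.* Take lists of size `2` on `Q` and of size `m` on `A`. It suffices to find a set `S`
of colors meeting every list of `A` and containing no list of `Q`: then `A` is colored from `S`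
and `Q` from the complement. A random `S`, containing each color independently with probability
`1/N`, works with positive probability as soon as `a(1 - 1/N)^m + q/N² < 1`
(`exists_separating_set`). This holds for `N = ⌊√(2q)⌋ + 1` and `m = N(⌊log₂ a⌋ + 2)`.
-/

open SimpleGraph Finset

/-- For a uniformly random `g : α → Fin N`, the event that all of `B` is mapped into `P` has
probability `(|P| / N)^|B|`, stated here as a count without division. -/
lemma card_filter_forall_mem {α : Type*} [Fintype α] [DecidableEq α] {N : ℕ}
    (B : Finset α) (P : Finset (Fin N)) :
    #{g : α → Fin N | ∀ x ∈ B, g x ∈ P} * N ^ #B = #P ^ #B * N ^ Fintype.card α := by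
  have h : ({g : α → Fin N | ∀ x ∈ B, g x ∈ P} : Finset (α → Fin N)) =
      Fintype.piFinset (fun x => if x ∈ B then P else univ) := by
    ext g
    simp only [mem_filter, mem_univ, true_and, Fintype.mem_piFinset]
    refine forall_congr' fun x => ?_
    by_cases hx : x ∈ B <;> simp [hx]
  have h2 : ∀ x, #(if x ∈ B then P else univ) = if x ∈ B then #P else N := by
    intro x; split_ifs <;> simp
  rw [h, Fintype.card_piFinset]
  simp only [h2]
  rw [Finset.prod_ite, Finset.prod_const, Finset.prod_const, mul_assoc, ← pow_add]
  have h3 : #{x : α | x ∈ B} = #B := by simp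
  have h4 : #{x : α | x ∉ B} + #B = Fintype.card α := by
    rw [← h3, add_comm, Finset.card_filter_add_card_filter_not, Finset.card_univ]
  rw [h3, h4]

/-- The union bound: some set `S` of colors meets every `A i` and contains no `B j`. -/
lemma exists_separating_set {α : Type*} [Fintype α] [DecidableEq α] {a q m n : ℕ}
    (A : Fin a → Finset α) (B : Fin q → Finset α)
    (hA : ∀ i, #(A i) = m) (hB : ∀ j, #(B j) = 2)
    (h : (a : ℝ) * ((n : ℝ) / (n + 1)) ^ m + q / ((n : ℝ) + 1) ^ 2 < 1) :
    ∃ S : Finset α, (∀ i, ∃ x ∈ A i, x ∈ S) ∧ ∀ j, ∃ x ∈ B j, x ∉ S := by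
  by_contra hS
  -- A function `g` stands for the set of colors `x` with `g x = 0`.
  let E : Fin a → Finset (α → Fin (n + 1)) := fun i => {g | ∀ x ∈ A i, g x ∈ ({0}ᶜ : Finset _)}
  let F : Fin q → Finset (α → Fin (n + 1)) := fun j => {g | ∀ x ∈ B j, g x ∈ ({0} : Finset _)}
  have hcov : (univ : Finset (α → Fin (n + 1))) ⊆ univ.biUnion E ∪ univ.biUnion F := by
    intro g _
    by_contra hg
    refine hS ⟨univ.filter (g · = 0), fun i => ?_, fun j => ?_⟩
    · by_contra hi
      refine hg (mem_union_left _ (mem_biUnion.2 ⟨i, mem_univ _, ?_⟩))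
      simpa [E] using hi
    · by_contra hj
      refine hg (mem_union_right _ (mem_biUnion.2 ⟨j, mem_univ _, ?_⟩))
      simpa [F] using hj
  have hcard : (n + 1) ^ Fintype.card α ≤ ∑ i, #(E i) + ∑ j, #(F j) := by
    calc (n + 1) ^ Fintype.card α = #(univ : Finset (α → Fin (n + 1))) := by simp
      _ ≤ _ := card_le_card hcov
      _ ≤ _ := card_union_le _ _
      _ ≤ _ := add_le_add card_biUnion_le card_biUnion_le
  have hn : (0 : ℝ) < (n : ℝ) + 1 := by positivity
  have hE : ∀ i, (#(E i) : ℝ) = ((n : ℝ) / (n + 1)) ^ m * ((n : ℝ) + 1) ^ Fintype.card α := by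
    intro i
    have := card_filter_forall_mem (A i) ({0}ᶜ : Finset (Fin (n + 1)))
    rw [hA, card_compl, Fintype.card_fin, card_singleton, Nat.add_sub_cancel] at this
    rw [div_pow, div_mul_eq_mul_div, eq_div_iff (by positivity)]
    exact_mod_cast this
  have hF : ∀ j, (#(F j) : ℝ) = 1 / ((n : ℝ) + 1) ^ 2 * ((n : ℝ) + 1) ^ Fintype.card α := by
    intro j
    have := card_filter_forall_mem (B j) ({0} : Finset (Fin (n + 1)))
    rw [hB, card_singleton] at this
    rw [div_mul_eq_mul_div, eq_div_iff (by positivity)]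
    have h' : (#(F j) : ℝ) * (((n + 1 : ℕ) : ℝ)) ^ 2 =
        1 ^ 2 * ((n + 1 : ℕ) : ℝ) ^ Fintype.card α := by exact_mod_cast this
    simpa using h'
  have hcard' : ((n : ℝ) + 1) ^ Fintype.card α ≤
      ∑ i, (#(E i) : ℝ) + ∑ j, (#(F j) : ℝ) := by exact_mod_cast hcard
  simp only [hE, hF, sum_const, card_univ, Fintype.card_fin, nsmul_eq_mul] at hcard'
  have hpos : (0 : ℝ) < ((n : ℝ) + 1) ^ Fintype.card α := by positivity
  have := mul_lt_mul_of_pos_right h hpos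
  have e : (a : ℝ) * (((n : ℝ) / (n + 1)) ^ m * ((n : ℝ) + 1) ^ Fintype.card α) +
      q * (1 / ((n : ℝ) + 1) ^ 2 * ((n : ℝ) + 1) ^ Fintype.card α) =
      (a * ((n : ℝ) / (n + 1)) ^ m + q / ((n : ℝ) + 1) ^ 2) *
        ((n : ℝ) + 1) ^ Fintype.card α := by ring
  linarith

/-- Coloring `A` from a separating set of colors and `Q` from its complement. -/
lemma choosable_of_lt_one {a q m n : ℕ}
    (h : (a : ℝ) * ((n : ℝ) / (n + 1)) ^ m + q / ((n : ℝ) + 1) ^ 2 < 1) :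
    Choosable (completeBipartiteGraph (Fin a) (Fin q)) (Sum.elim (fun _ => m) (fun _ => 2)) := by
  intro L hL
  let C : Finset ℕ := univ.biUnion L
  have hC : ∀ v, ∀ x ∈ L v, x ∈ C := fun v x hx => mem_biUnion.2 ⟨v, mem_univ _, hx⟩
  have hcard : ∀ v, #((L v).subtype (· ∈ C)) = #(L v) := by
    intro v
    rw [card_subtype, filter_true_of_mem (hC v)]
  obtain ⟨S, hSA, hSB⟩ := exists_separating_set
    (fun i => (L (Sum.inl i)).subtype (· ∈ C)) (fun j => (L (Sum.inr j)).subtype (· ∈ C))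
    (fun i => by rw [hcard, hL]; rfl) (fun j => by rw [hcard, hL]; rfl) h
  choose x hx hxS using hSA
  choose y hy hyS using hSB
  have hxy : ∀ i j, (x i : ℕ) ≠ y j := fun i j e => hyS j (Subtype.ext e ▸ hxS i)
  refine ⟨Sum.elim (fun i => x i) (fun j => y j), ?_, ?_⟩
  · rintro (i | j)
    · exact mem_subtype.1 (hx i)
    · exact mem_subtype.1 (hy j)
  · rintro (i | j) (i' | j') hadj
    · simp at hadj
    · exact hxy i j'
    · exact (hxy i' j).symm
    · simp at hadj

/-- A vertex of `A` whose list consists of colors forced on the one-color vertices of `Q` cannot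
be colored. -/
lemma card_ones_lt_of_choosable {a q : ℕ} {f : Fin a ⊕ Fin q → ℕ}
    (hf : Choosable (completeBipartiteGraph (Fin a) (Fin q)) f) (i : Fin a) :
    #{j : Fin q | f (Sum.inr j) = 1} < f (Sum.inl i) := by
  by_contra! hlt
  rw [← card_map Fin.valEmbedding] at hlt
  obtain ⟨T, hT, hTc⟩ := exists_subset_card_eq hlt
  let L : Fin a ⊕ Fin q → Finset ℕ := Sum.elim
    (fun i' => if i' = i then T else range (f (Sum.inl i')))
    (fun j => if f (Sum.inr j) = 1 then {(j : ℕ)} else range (f (Sum.inr j)))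
  have hL : ∀ v, #(L v) = f v := by
    rintro (i' | j)
    · by_cases h : i' = i
      · subst h; simpa [L] using hTc
      · simp [L, h]
    · by_cases h : f (Sum.inr j) = 1 <;> simp [L, h]
  obtain ⟨c, hc, hadj⟩ := hf L hL
  have hi : c (Sum.inl i) ∈ T := by simpa [L] using hc (Sum.inl i)
  obtain ⟨j, hj, hji⟩ := mem_map.1 (hT hi)
  have hj1 : f (Sum.inr j) = 1 := by simpa using hj
  have hcj : c (Sum.inr j) = j := by simpa [L, hj1] using hc (Sum.inr j)
  refine hadj (Sum.inl i) (Sum.inr j) (by simp) ?_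
  rw [hcj, ← hji]; rfl

lemma pos_of_choosable {V : Type*} {G : SimpleGraph V} {f : V → ℕ} (hf : Choosable G f) (v : V) :
    0 < f v := by
  obtain ⟨c, hc, -⟩ := hf (fun v => range (f v)) (fun v => card_range _)
  exact (Nat.zero_le _).trans_lt (mem_range.1 (hc v))

lemma two_mul_add_le_of_choosable {a q : ℕ} (ha : 1 ≤ a) {f : Fin a ⊕ Fin q → ℕ}
    (hf : Choosable (completeBipartiteGraph (Fin a) (Fin q)) f) :
    2 * q + a ≤ ∑ v, f v := by
  set s := #{j : Fin q | f (Sum.inr j) = 1} with hs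
  have hA : a * (s + 1) ≤ ∑ i : Fin a, f (Sum.inl i) := by
    have := card_nsmul_le_sum univ (fun i : Fin a => f (Sum.inl i)) (s + 1)
      (fun i _ => card_ones_lt_of_choosable hf i)
    simpa using this
  have hQ : q * 2 ≤ ∑ j : Fin q, (f (Sum.inr j) + if f (Sum.inr j) = 1 then 1 else 0) := by
    have := card_nsmul_le_sum univ
      (fun j : Fin q => f (Sum.inr j) + if f (Sum.inr j) = 1 then 1 else 0) 2
      (fun j _ => by
        have := pos_of_choosable hf (Sum.inr j)
        split_ifs <;> omega)
    simpa using this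
  rw [sum_add_distrib, ← card_filter, ← hs] at hQ
  rw [Fintype.sum_sum_type]
  nlinarith

/-- The union bound condition holds for `N = n + 1 = ⌊√(2q)⌋ + 1` and
`m = N (⌊log₂ a⌋ + 2)`. -/
lemma union_bound_lt_one (a q : ℕ) :
    (a : ℝ) * ((Nat.sqrt (2 * q) : ℝ) / (Nat.sqrt (2 * q) + 1)) ^
        ((Nat.sqrt (2 * q) + 1) * (Nat.log 2 a + 2)) +
      q / ((Nat.sqrt (2 * q) : ℝ) + 1) ^ 2 < 1 := by
  set n := Nat.sqrt (2 * q) with hn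
  have hn0 : (0 : ℝ) < (n : ℝ) + 1 := by positivity
  have h1 : (q : ℝ) / ((n : ℝ) + 1) ^ 2 < 1 / 2 := by
    rw [div_lt_div_iff₀ (by positivity) (by norm_num)]
    have : 2 * q < (n + 1) * (n + 1) := Nat.lt_succ_sqrt _
    have : (2 * q : ℝ) < (n + 1) * (n + 1) := by exact_mod_cast this
    nlinarith
  have h2 : ((n : ℝ) / (n + 1)) ^ (n + 1) ≤ 1 / 2 := by
    have hexp : ((n : ℝ) / (n + 1)) ≤ Real.exp (-(1 / ((n : ℝ) + 1))) := by
      have := Real.add_one_le_exp (-(1 / ((n : ℝ) + 1)))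
      have e : (n : ℝ) / (n + 1) = -(1 / ((n : ℝ) + 1)) + 1 := by field_simp; ring
      rwa [e]
    calc ((n : ℝ) / (n + 1)) ^ (n + 1) ≤ Real.exp (-(1 / ((n : ℝ) + 1))) ^ (n + 1) := by gcongr
      _ = Real.exp (-1) := by
        rw [← Real.exp_nat_mul]; congr 1; push_cast; field_simp
      _ ≤ 1 / 2 := by
        rw [Real.exp_neg, ← one_div]
        gcongr
        have := Real.add_one_le_exp (1 : ℝ)
        linarith
  have h3 : (a : ℝ) * ((n : ℝ) / (n + 1)) ^ ((n + 1) * (Nat.log 2 a + 2)) ≤ 1 / 2 := by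
    have ha : (a : ℝ) ≤ 2 ^ (Nat.log 2 a + 1) := by
      exact_mod_cast (Nat.lt_pow_succ_log_self (by norm_num) a).le
    rw [pow_mul]
    calc (a : ℝ) * (((n : ℝ) / (n + 1)) ^ (n + 1)) ^ (Nat.log 2 a + 2)
        ≤ 2 ^ (Nat.log 2 a + 1) * (1 / 2) ^ (Nat.log 2 a + 2) := by gcongr
      _ = 1 / 2 := by
        rw [pow_succ (1 / 2 : ℝ), ← mul_assoc, ← mul_pow]; norm_num
  linarith

lemma sumChoice_le (a q : ℕ) :
    sumChoice (completeBipartiteGraph (Fin a) (Fin q)) ≤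
      2 * q + a * ((Nat.sqrt (2 * q) + 1) * (Nat.log 2 a + 2)) :=
  Nat.sInf_le ⟨_, choosable_of_lt_one (union_bound_lt_one a q), by
    simp [Fintype.sum_sum_type]; ring⟩

lemma le_sumChoice {a : ℕ} (q : ℕ) (ha : 1 ≤ a) :
    2 * q + a ≤ sumChoice (completeBipartiteGraph (Fin a) (Fin q)) := by
  refine le_csInf ⟨_, _, choosable_of_lt_one (union_bound_lt_one a q), rfl⟩ ?_
  rintro _ ⟨f, hf, rfl⟩
  exact two_mul_add_le_of_choosable ha hf

lemma eventually_log_le (δ : ℝ) (hδ : 0 < δ) :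
    ∀ᶠ a : ℕ in Filter.atTop, ((Nat.log 2 a + 2 : ℕ) : ℝ) ≤ δ * √(a : ℝ) := by
  have h2 : 0 < Real.log 2 := Real.log_pos (by norm_num)
  have hlog := ((isLittleO_log_rpow_atTop (r := 1 / 2) (by norm_num)).comp_tendsto
    (tendsto_natCast_atTop_atTop (R := ℝ))).bound (c := δ / 2 * Real.log 2) (by positivity)
  have hs : Filter.Tendsto (fun a : ℕ => √(a : ℝ)) Filter.atTop Filter.atTop :=
    Real.tendsto_sqrt_atTop.comp tendsto_natCast_atTop_atTop
  filter_upwards [hlog, hs.eventually_ge_atTop (4 / δ), Filter.eventually_ge_atTop 1]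
    with a h4 h5 ha
  have hl : (Nat.log 2 a : ℝ) ≤ Real.log a / Real.log 2 := by
    simpa [Real.logb] using Real.natLog_le_logb a 2
  simp only [Function.comp_apply, Real.norm_eq_abs, ← Real.sqrt_eq_rpow,
    abs_of_nonneg (Real.sqrt_nonneg _)] at h4
  have h6 : Real.log a / Real.log 2 ≤ δ / 2 * √(a : ℝ) := by
    rw [div_le_iff₀ h2]
    have := le_abs_self (Real.log a)
    linarith
  rw [div_le_iff₀ hδ] at h5
  push_cast
  linarith

/-- For every `ε > 0` there is `A₀` such that for all `a ≥ A₀` and `q ≥ a³` we have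
`|χ_sc(K_{a,q})/(a+q) − 2| < ε`; in particular `χ_sc(K_{a,q})/(a+q)` tends to `2`
while the minimum degree of `K_{a,q}` (namely `a`) tends to infinity. -/
theorem sumChoice_ratio_tendsto_two :
    ∀ ε : ℝ, 0 < ε → ∃ A₀ : ℕ, ∀ a q : ℕ, A₀ ≤ a → a ^ 3 ≤ q →
      |(sumChoice (completeBipartiteGraph (Fin a) (Fin q)) : ℝ) / ((a : ℝ) + q) - 2| < ε := by
  intro ε hε
  obtain ⟨A₁, hA₁⟩ := Filter.eventually_atTop.1 (eventually_log_le (ε / 6) (by positivity))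
  obtain ⟨A₂, hA₂⟩ := exists_nat_gt (1 / ε)
  refine ⟨A₁ + A₂ + 1, fun a q ha hq => ?_⟩
  have ha1 : 1 ≤ a := by omega
  have hlog := hA₁ a (by omega)
  have hlow := le_sumChoice q ha1
  have hup := sumChoice_le a q
  have haR : (1 : ℝ) ≤ a := by exact_mod_cast ha1
  have hqR : (a : ℝ) ^ 3 ≤ q := by exact_mod_cast hq
  have hq1 : (1 : ℝ) ≤ q := (one_le_pow₀ haR).trans hqR
  have haε : 1 < ε * a := by
    have : (A₂ : ℝ) ≤ a := by exact_mod_cast (by omega : A₂ ≤ a)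
    rw [div_lt_iff₀ hε] at hA₂
    nlinarith
  have hlowR : (2 * q + a : ℝ) ≤ sumChoice (completeBipartiteGraph (Fin a) (Fin q)) := by
    exact_mod_cast hlow
  have hupR : (sumChoice (completeBipartiteGraph (Fin a) (Fin q)) : ℝ) ≤
      2 * q + a * ((Nat.sqrt (2 * q) + 1) * (Nat.log 2 a + 2 : ℕ)) := by exact_mod_cast hup
  have hsq1 : 1 ≤ √(q : ℝ) := Real.one_le_sqrt.2 hq1
  have hN : (Nat.sqrt (2 * q) + 1 : ℝ) ≤ 3 * √(q : ℝ) := by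
    have h1 : (Nat.sqrt (2 * q) : ℝ) ≤ √((2 * q : ℕ) : ℝ) := Real.nat_sqrt_le_real_sqrt
    have h2 : √((2 * q : ℕ) : ℝ) ≤ 2 * √(q : ℝ) := by
      rw [Real.sqrt_le_left (by positivity), mul_pow, Real.sq_sqrt (by positivity)]
      push_cast; linarith
    linarith
  have hsa : (a : ℝ) * √(a : ℝ) ≤ √(q : ℝ) := by
    apply Real.le_sqrt_of_sq_le
    rw [mul_pow, Real.sq_sqrt (by positivity)]
    linarith [hqR, (by ring : (a : ℝ) ^ 2 * a = a ^ 3)]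
  have hmain : (a : ℝ) * ((Nat.sqrt (2 * q) + 1) * (Nat.log 2 a + 2 : ℕ)) ≤ ε / 2 * q := by
    calc (a : ℝ) * ((Nat.sqrt (2 * q) + 1) * (Nat.log 2 a + 2 : ℕ))
        ≤ a * ((3 * √(q : ℝ)) * (ε / 6 * √(a : ℝ))) := by gcongr
      _ = ε / 2 * √(q : ℝ) * (a * √(a : ℝ)) := by ring
      _ ≤ ε / 2 * √(q : ℝ) * √(q : ℝ) := by gcongr
      _ = ε / 2 * q := by rw [mul_assoc, Real.mul_self_sqrt (by positivity)]
  -- The lower bound loses only `a`, and `a < ε q` because `q ≥ a³ ≥ a²` and `ε a > 1`.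
  have haq : (a : ℝ) < ε * q := by
    have : (a : ℝ) * a ≤ q := by nlinarith
    nlinarith
  have hpos : (0 : ℝ) < a + q := by linarith
  rw [abs_sub_lt_iff, sub_lt_iff_lt_add, div_lt_iff₀ hpos, sub_lt_comm, lt_div_iff₀ hpos]
  constructor <;> nlinarith [mul_pos hε (by linarith : (0 : ℝ) < a)]
end
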